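/- Let M be a d-dimensional manifold without boundary, π : E → M a fiber bundle with path-connected fiber, and W a sufficiently separated collection for π. Let F ⊆ Γ(E) be a subspace, and for pairwise disjoint elements (Δ_1,γ_1), …, (Δ_k,γ_k) of W set F(rel Δ_1, …, Δ_k) := F ∩ Γ(E, Δ_1, …, Δ_k). If for every k ≥ 1 and every k-tuple of pairwise disjoint elements of W the inclusion F(rel Δ_1, …, Δ_k) ↪ Γ(E, Δ_1, …, Δ_k) is a weak homotopy equivalence, then there exist a topological space X and continuous maps s : X → F and w : X → Γ(E) such that w equals the composite of s with the inclusion F ↪ Γ(E) and w is a weak homotopy equivalence; in particular, the inclusion F ↪ Γ(E) admits a section up to weak homotopy. -/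

import Mathlib

/-!
Let `G i` be the space of sections agreeing with the `i`-th germ of an infinite sequence of pairwise
disjoint elements of `W`, and let `X` be the space of pairs of a section `s ∈ Fs` and a nonempty set
of indices `i` with `s ∈ G i`, topologized so that a map `A → X` is a map `A → Fs` with an open
cover of `A` over whose `i`-th member it lands in `G i`. The map `X → Γ(E)` is a weak equivalence
because it has the lifting property up to homotopy for all pairs (disk, sphere):

* By compactness only finitely many germs occur on the sphere, so some germ `m` is disjoint from
  all of them. Any family of sections parametrized by the disk can be deformed into `G m` by a
  homotopy supported near the domain of `m`, as this domain is contractible and cofibred in a ball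
  and the fiber is path connected. This homotopy is damped near the sphere, so old germs remain.
* The disk is then covered by open sets on each of which some germ is satisfied. On the cells of a
  fine grid, the hypothesis on tuples of germs allows one to push the family into `Fs`, by induction
  on the dimension, while keeping every germ satisfied on a neighborhood of the cell.
-/

open scoped unitInterval Topology

universe u v w

section WHE

variable {X : Type u} {Y : Type v} [TopologicalSpace X] [TopologicalSpace Y]

/-- The map induced on path components by a continuous map. -/
noncomputable def pi0Map (f : C(X, Y)) : ZerothHomotopy X → ZerothHomotopy Y :=
  Quotient.map f (fun _ _ h => ⟨h.somePath.map f.continuous⟩)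

/-- The map induced on generalized loops by a continuous map. -/
def genLoopMap {N : Type} (f : C(X, Y)) {x : X} (p : GenLoop N X x) :
    GenLoop N Y (f x) :=
  ⟨f.comp p.1, fun y hy => by
    show f (p.1 y) = f x
    rw [p.2 y hy]⟩

theorem genLoopMap_homotopic {N : Type} (f : C(X, Y)) {x : X} {p q : GenLoop N X x}
    (h : GenLoop.Homotopic p q) : GenLoop.Homotopic (genLoopMap f p) (genLoopMap f q) :=
  h.map (fun H => H.compContinuousMap f)

/-- The map induced on `n`-th homotopy groups by a continuous map. -/
noncomputable def piMap (n : ℕ) (f : C(X, Y)) (x : X) :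
    HomotopyGroup (Fin n) X x → HomotopyGroup (Fin n) Y (f x) :=
  Quotient.map (genLoopMap f) (fun _ _ h => genLoopMap_homotopic f h)

/-- A map of topological spaces is a weak homotopy equivalence if it is continuous, induces a
bijection on path components and, for every basepoint and every `n ≥ 1`, a bijection on `n`-th
homotopy groups. -/
def IsWeakHomotopyEquiv (f : X → Y) : Prop :=
  ∃ hf : Continuous f,
    Function.Bijective (pi0Map ⟨f, hf⟩) ∧
      ∀ n : ℕ, 1 ≤ n → ∀ x : X, Function.Bijective (piMap n ⟨f, hf⟩ x)

end WHE

section Cofib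

/-- The inclusion of a closed subset `A ⊆ X` is a closed cofibration if it satisfies the
homotopy extension property with respect to all spaces. -/
def ClosedCofibration {X : Type u} [TopologicalSpace X] (A : Set X) : Prop :=
  IsClosed A ∧ ∀ (Z : Type u) [TopologicalSpace Z] (f : C(X, Z))
    (h : C(A × unitInterval, Z)), (∀ a : A, h (a, 0) = f a) →
      ∃ H : C(X × unitInterval, Z), (∀ x : X, H (x, 0) = f x) ∧
        ∀ (a : A) (t : unitInterval), H (↑a, t) = h (a, t)

end Cofib

section Bundle

variable {E M : Type u} [TopologicalSpace E] [TopologicalSpace M]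

/-- `π : E → M` is a fiber bundle with fiber `F`: a continuous map which is locally on `M`
trivial with fiber `F`. -/
structure IsFiberBundle (F : Type u) [TopologicalSpace F] (π : E → M) : Prop where
  continuous : Continuous π
  locTriv : ∀ x : M, ∃ U : Set M, IsOpen U ∧ x ∈ U ∧
    ∃ e : (π ⁻¹' U) ≃ₜ (U × F), ∀ y : π ⁻¹' U, ((e y).1 : M) = π ↑y

/-- The space of continuous sections of `π : E → M`, topologized as a subspace of `C(M, E)`
with the compact-open topology. -/
abbrev SectionSpace (π : E → M) : Type u :=
  {s : C(M, E) // ∀ x : M, π (s x) = x}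

/-- The closed unit ball in `ℝ^d`. -/
def closedDisk (d : ℕ) : Set (EuclideanSpace ℝ (Fin d)) :=
  Metric.closedBall 0 1

/-- A subset `Δ ⊆ M` together with (a representative of) a germ of a continuous section of
`π` on a neighborhood of `Δ`. -/
structure GermData (π : E → M) : Type u where
  Δ : Set M
  U : Set M
  isOpen : IsOpen U
  subset : Δ ⊆ U
  sec : C(U, E)
  isSec : ∀ x : U, π (sec x) = ↑x

/-- A section has germ `g` if it agrees with the germ's section on the underlying set. -/
def GermData.Fixes {π : E → M} (g : GermData π) (s : SectionSpace π) : Prop :=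
  ∀ x (hx : x ∈ g.Δ), s.1 x = g.sec ⟨x, g.subset hx⟩

/-- The space `Γ(E, Δ_0, …, Δ_k)` of sections agreeing with the given germs `γ_i` on the
sets `Δ_i`. -/
def relSections {π : E → M} {k : ℕ} (g : Fin k → GermData π) : Set (SectionSpace π) :=
  {s | ∀ i, (g i).Fixes s}

/-- A tuple of pairs `(Δ_i, γ_i)` is disjoint if the underlying sets are pairwise disjoint. -/
def DisjTuple {π : E → M} {k : ℕ} (g : Fin k → GermData π) : Prop :=
  ∀ i j, i ≠ j → Disjoint (g i).Δ (g j).Δ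

/-- A sufficiently separated collection for the bundle `π : E → M` over a `d`-dimensional
manifold `M`. -/
structure IsSuffSep (d : ℕ) {E M : Type u} [TopologicalSpace E] [TopologicalSpace M]
    (π : E → M) (W : Set (GermData π)) : Prop where
  compact : ∀ g ∈ W, IsCompact g.Δ
  contractible : ∀ g ∈ W, ContractibleSpace g.Δ
  cofib : ∀ g ∈ W, ∃ D : Set M, Nonempty (D ≃ₜ closedDisk d) ∧ g.Δ ⊆ interior D ∧
    ClosedCofibration (X := D) (Subtype.val ⁻¹' g.Δ)
  sep : ∀ (k : ℕ) (g : Fin k → GermData π), (∀ i, g i ∈ W) →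
    ∃ g' ∈ W, ∃ D : Set M, Nonempty (D ≃ₜ closedDisk d) ∧ g'.Δ ⊆ interior D ∧
      ∀ i, Disjoint D (g i).Δ

end Bundle

section Simplex

/-- The `i`-th face inclusion `Δ^p → Δ^{p+1}` of standard topological simplices. -/
def simplexFace {p : ℕ} (i : Fin (p + 2)) (t : stdSimplex ℝ (Fin (p + 1))) :
    stdSimplex ℝ (Fin (p + 2)) :=
  ⟨i.insertNth 0 t.1, by
    constructor
    · intro x
      rcases eq_or_ne x i with rfl | hx
      · simp
      · obtain ⟨j, rfl⟩ := Fin.exists_succAbove_eq hx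
        rw [Fin.insertNth_apply_succAbove]
        exact t.2.1 j
    · rw [Fin.sum_univ_succAbove _ i]
      simp only [Fin.insertNth_apply_same, Fin.insertNth_apply_succAbove, zero_add]
      exact t.2.2⟩

end Simplex

section

open Set Metric

section Gluing

variable {X Y : Type*} [TopologicalSpace X] [TopologicalSpace Y] {s t : Set X}

theorem exists_continuousMap_of_isClosed_cover (hs : IsClosed s) (ht : IsClosed t)
    (hst : ∀ x, x ∈ s ∨ x ∈ t) (f : C(s, Y)) (g : C(t, Y))
    (hfg : ∀ x (hxs : x ∈ s) (hxt : x ∈ t), f ⟨x, hxs⟩ = g ⟨x, hxt⟩) :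
    ∃ k : C(X, Y), (∀ x : s, k x = f x) ∧ ∀ x : t, k x = g x := by
  classical
  let k : X → Y := fun x =>
    if hx : x ∈ s then f ⟨x, hx⟩ else g ⟨x, (hst x).resolve_left hx⟩
  have hkf : ∀ x : s, k x = f x := fun x => dif_pos x.2
  have hkg : ∀ x : t, k x = g x := fun x => by
    by_cases hx : (x : X) ∈ s
    · exact (dif_pos hx).trans (hfg x hx x.2)
    · exact dif_neg hx
  have hks : ContinuousOn k s := by
    rw [continuousOn_iff_continuous_domRestrict]
    exact f.continuous.congr fun x => (hkf x).symm
  have hkt : ContinuousOn k t := by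
    rw [continuousOn_iff_continuous_domRestrict]
    exact g.continuous.congr fun x => (hkg x).symm
  refine ⟨⟨k, ?_⟩, hkf, hkg⟩
  rw [← continuousOn_univ, ← eq_univ_of_forall hst]
  exact hks.union_of_isClosed hkt hs ht

end Gluing

section Compression

variable {Z D D' : Type*} [TopologicalSpace Z] [TopologicalSpace D] [TopologicalSpace D']
  {A Y : Set Z} {S : Set D}

/-- `f` is a map of pairs `(D, S) → (Y, A)`, for subspaces `Y` and `A` of `Z`. -/
def IsPairMap (A Y : Set Z) (S : Set D) (f : C(D, Z)) : Prop :=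
  (∀ x, f x ∈ Y) ∧ MapsTo f S A

/-- Every map of pairs `(D, S) → (Y, A)` is homotopic, as a map of pairs, to a map into `A`. -/
def Compressible (A Y : Set Z) (S : Set D) : Prop :=
  ∀ f : C(D, Z), IsPairMap A Y S f →
    ∃ g : C(D, Z), (∀ x, g x ∈ A) ∧ f.HomotopicWith g (IsPairMap A Y S)

/-- The homotopy extension and lifting property of the pair `(D, S)` with respect to `(Y, A)`:
a homotopy in `Y` from the restriction `f|S` to a map into `A` extends to a homotopy in `Y` from
`f` to a map into `A`. -/
def HasHELP (A Y : Set Z) (S : Set D) : Prop :=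
  ∀ (f : C(D, Z)) (φ : C(I × S, Z)), (∀ x, f x ∈ Y) → (∀ x, φ (0, x) = f x) → (∀ p, φ p ∈ Y) →
    (∀ x, φ (1, x) ∈ A) → ∃ ψ : C(I × D, Z), (∀ x, ψ (0, x) = f x) ∧
      (∀ t (x : S), ψ (t, x) = φ (t, x)) ∧ (∀ p, ψ p ∈ Y) ∧ ∀ x, ψ (1, x) ∈ A

theorem compressible_self (Y : Set Z) (S : Set D) : Compressible Y Y S :=
  fun f hf => ⟨f, hf.1, .refl f hf⟩

theorem IsPairMap.comp {S' : Set D'} {f : C(D, Z)} (hf : IsPairMap A Y S f) {h : C(D', D)}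
    (hh : MapsTo h S' S) : IsPairMap A Y S' (f.comp h) :=
  ⟨fun _ => hf.1 _, hf.2.comp hh⟩

theorem IsPairMap.homotopicWith_comp {S' : Set D'} {f g : C(D, Z)}
    (h : f.HomotopicWith g (IsPairMap A Y S)) {k : C(D', D)} (hk : MapsTo k S' S) :
    (f.comp k).HomotopicWith (g.comp k) (IsPairMap A Y S') := by
  obtain ⟨H⟩ := h
  exact ⟨⟨H.toHomotopy.compContinuousMap k, fun t => (H.prop t).comp hk⟩⟩

theorem IsPairMap.of_homotopicWith {f g : C(D, Z)}
    (h : f.HomotopicWith g (IsPairMap A Y S)) : IsPairMap A Y S g := by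
  obtain ⟨H⟩ := h
  simpa using H.prop 1

theorem Compressible.of_homeomorph {S' : Set D'} (h : Compressible A Y S) (e : D ≃ₜ D')
    (he : ∀ x, e x ∈ S' ↔ x ∈ S) : Compressible A Y S' := by
  have he' : MapsTo e.symm S' S := fun y hy => by rwa [← he, e.apply_symm_apply]
  intro f hf
  obtain ⟨g, hg, hfg⟩ := h (f.comp e) (hf.comp fun x => (he x).2)
  refine ⟨g.comp e.symm, fun _ => hg _, ?_⟩
  have := IsPairMap.homotopicWith_comp (k := (e.symm : C(D', D))) hfg he'
  rwa [ContinuousMap.comp_assoc, e.toContinuousMap_comp_symm, ContinuousMap.comp_id] at this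

end Compression

section UnitBall

variable {V : Type*} [NormedAddCommGroup V]

/-- The closed unit ball of a normed space, as a topological space. -/
abbrev UnitBall (V : Type*) [NormedAddCommGroup V] : Type _ :=
  closedBall (0 : V) 1

/-- The unit sphere, as a subset of the unit ball. -/
def unitSphere (V : Type*) [NormedAddCommGroup V] : Set (UnitBall V) :=
  {x | ‖(x : V)‖ = 1}

namespace UnitBall

theorem norm_le (x : UnitBall V) : ‖(x : V)‖ ≤ 1 :=
  mem_closedBall_zero_iff.1 x.2

variable [NormedSpace ℝ V]

/-- The point dividing the segment from `x` to `y` in the ratio `t : 1 - t`. -/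
def segment : C(I × UnitBall V × UnitBall V, UnitBall V) where
  toFun p := ⟨AffineMap.lineMap (p.2.1 : V) (p.2.2 : V) (p.1 : ℝ),
    (convex_closedBall (0 : V) 1).lineMap_mem p.2.1.2 p.2.2.2 p.1.2⟩
  continuous_toFun := by
    simp only [AffineMap.lineMap_apply_module]
    fun_prop

theorem coe_segment (t : I) (x y : UnitBall V) :
    (segment (t, x, y) : V) = (1 - t : ℝ) • (x : V) + (t : ℝ) • (y : V) :=
  AffineMap.lineMap_apply_module ..

/-- The map which stretches the ball of radius `1 / 2` onto the unit ball, and the remaining collar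
onto the unit sphere. -/
noncomputable def stretch : C(UnitBall V, UnitBall V) where
  toFun x := ⟨(max ‖(x : V)‖ 2⁻¹)⁻¹ • (x : V), by
    have : 0 < max ‖(x : V)‖ 2⁻¹ := lt_max_of_lt_right (by norm_num)
    rw [mem_closedBall_zero_iff, norm_smul, norm_inv, Real.norm_of_nonneg this.le,
      inv_mul_le_one₀ this]
    exact le_max_left _ _⟩
  continuous_toFun := by
    refine .subtype_mk (.smul (.inv₀ (by fun_prop) fun x => ?_) (by fun_prop)) _
    exact (lt_max_of_lt_right (by norm_num)).ne'

theorem coe_stretch_of_le {x : UnitBall V} (hx : ‖(x : V)‖ ≤ 2⁻¹) :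
    (stretch x : V) = (2 : ℝ) • (x : V) := by
  simp [stretch, max_eq_right hx]

theorem coe_stretch_of_ge {x : UnitBall V} (hx : 2⁻¹ ≤ ‖(x : V)‖) :
    (stretch x : V) = ‖(x : V)‖⁻¹ • (x : V) := by
  simp [stretch, max_eq_left hx]

theorem stretch_mem_unitSphere {x : UnitBall V} (hx : 2⁻¹ ≤ ‖(x : V)‖) :
    stretch x ∈ unitSphere V := by
  have : ‖(x : V)‖ ≠ 0 := by linarith
  simp [unitSphere, coe_stretch_of_ge hx, norm_smul, this]

theorem stretch_of_mem_unitSphere {x : UnitBall V} (hx : x ∈ unitSphere V) : stretch x = x := by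
  have hx1 : ‖(x : V)‖ = 1 := hx
  ext1
  rw [coe_stretch_of_ge (by norm_num [hx1]), hx1, inv_one, one_smul]

/-- The straight-line homotopy from half the identity to `stretch`, which moves every point along
its radius. -/
noncomputable def radialHomotopy : C(I × UnitBall V, UnitBall V) :=
  segment.comp
    ⟨fun p => (p.1, segment (⟨2⁻¹, by norm_num, by norm_num⟩, 0, p.2), stretch p.2), by fun_prop⟩

theorem coe_radialHomotopy (t : I) (x : UnitBall V) :
    (radialHomotopy (t, x) : V) = ((1 - t) * 2⁻¹ : ℝ) • (x : V) + (t : ℝ) • (stretch x : V) := by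
  simp [radialHomotopy, coe_segment, smul_smul]

theorem norm_radialHomotopy_zero_le (x : UnitBall V) : ‖(radialHomotopy (0, x) : V)‖ ≤ 2⁻¹ := by
  simpa [coe_radialHomotopy, norm_smul] using norm_le x

theorem stretch_radialHomotopy_zero (x : UnitBall V) : stretch (radialHomotopy (0, x)) = x := by
  ext1
  simp [coe_stretch_of_le (norm_radialHomotopy_zero_le x), coe_radialHomotopy]

theorem radialHomotopy_one (x : UnitBall V) : radialHomotopy (1, x) = stretch x := by
  ext1
  simp [coe_radialHomotopy]

theorem coe_radialHomotopy_of_mem_unitSphere (t : I) {x : UnitBall V} (hx : x ∈ unitSphere V) :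
    (radialHomotopy (t, x) : V) = ((1 + t) * 2⁻¹ : ℝ) • (x : V) := by
  rw [coe_radialHomotopy, stretch_of_mem_unitSphere hx, ← add_smul]
  ring_nf

theorem norm_radialHomotopy_of_mem_unitSphere (t : I) {x : UnitBall V} (hx : x ∈ unitSphere V) :
    ‖(radialHomotopy (t, x) : V)‖ = (1 + t) * 2⁻¹ := by
  have hx1 : ‖(x : V)‖ = 1 := hx
  rw [coe_radialHomotopy_of_mem_unitSphere t hx, norm_smul, hx1, mul_one, Real.norm_of_nonneg]
  have := t.2.1
  positivity

theorem stretch_radialHomotopy_of_mem_unitSphere (t : I) {x : UnitBall V}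
    (hx : x ∈ unitSphere V) : stretch (radialHomotopy (t, x)) = x := by
  have ht : (0 : ℝ) ≤ t := t.2.1
  ext1
  rw [coe_stretch_of_ge (by rw [norm_radialHomotopy_of_mem_unitSphere t hx]; linarith),
    norm_radialHomotopy_of_mem_unitSphere t hx, coe_radialHomotopy_of_mem_unitSphere t hx,
    smul_smul, inv_mul_cancel₀ (by positivity), one_smul]

end UnitBall

end UnitBall

section HomotopyExtension

variable {V Z : Type*} [NormedAddCommGroup V] [NormedSpace ℝ V] [TopologicalSpace Z]
  {A Y : Set Z}

open UnitBall

theorem UnitBall.exists_collar_extension (f : C(UnitBall V, Z)) (φ : C(I × unitSphere V, Z))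
    (hφ : ∀ x, φ (0, x) = f x) :
    ∃ b : C(UnitBall V, Z), (∀ x : UnitBall V, ‖(x : V)‖ ≤ 2⁻¹ → b x = f (stretch x)) ∧
      ∀ (x : UnitBall V) (hx : 2⁻¹ ≤ ‖(x : V)‖),
        b x = φ (projIcc 0 1 zero_le_one (2 * ‖(x : V)‖ - 1),
          ⟨stretch x, stretch_mem_unitSphere hx⟩) := by
  obtain ⟨b, hb, hb'⟩ := exists_continuousMap_of_isClosed_cover
    (s := {x : UnitBall V | ‖(x : V)‖ ≤ 2⁻¹}) (t := {x : UnitBall V | 2⁻¹ ≤ ‖(x : V)‖})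
    (isClosed_le (by fun_prop) (by fun_prop)) (isClosed_le (by fun_prop) (by fun_prop))
    (fun x => le_total ‖(x : V)‖ 2⁻¹) (f.comp ⟨fun x => stretch x, by fun_prop⟩)
    (φ.comp ⟨fun x => (projIcc 0 1 zero_le_one (2 * ‖(x : V)‖ - 1),
      ⟨stretch x, stretch_mem_unitSphere x.2⟩), by fun_prop⟩) fun x hx hx' => by
      have : 2 * ‖(x : V)‖ - 1 = 0 := by rw [le_antisymm (a := ‖(x : V)‖) hx hx']; norm_num
      simp [this, projIcc_left, hφ]
  exact ⟨b, fun x hx => hb ⟨x, hx⟩, fun x hx => hb' ⟨x, hx⟩⟩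

/-- Over the collar `1 / 2 ≤ ‖x‖ ≤ 1` the given homotopy is spliced onto the map, the result is
compressed, and the collar is then reparametrised so that its outer end stays in place. -/
theorem Compressible.hasHELP (h : Compressible A Y (unitSphere V)) :
    HasHELP A Y (unitSphere V) := by
  intro f φ hf hφ0 hφY hφ1
  obtain ⟨b, hb_in, hb_out⟩ := exists_collar_extension f φ hφ0
  have hb_sphere : ∀ (x : UnitBall V) (hx : x ∈ unitSphere V), b x = φ (1, ⟨x, hx⟩) := by
    intro x hx
    have hx1 : ‖(x : V)‖ = 1 := hx
    rw [hb_out x (by norm_num [hx1])]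
    norm_num [hx1, stretch_of_mem_unitSphere hx, projIcc_right]
  obtain ⟨g, hg, ⟨H⟩⟩ := h b ⟨fun x => (le_total ‖(x : V)‖ 2⁻¹).elim
    (fun hx => hb_in x hx ▸ hf _) fun hx => hb_out x hx ▸ hφY _,
    fun x hx => hb_sphere x hx ▸ hφ1 _⟩
  have hHY : ∀ p, H p ∈ Y := fun p => (H.prop p.1).1 p.2
  have hHA : ∀ t, ∀ x ∈ unitSphere V, H (t, x) ∈ A := fun t x hx => (H.prop t).2 hx
  let τ : C(I × UnitBall V, I) :=
    ⟨fun p => projIcc 0 1 zero_le_one (min (p.1 : ℝ) (2 - 2 * ‖(p.2 : V)‖)), by fun_prop⟩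
  have hτ : ∀ (t : I) (x : UnitBall V), (t : ℝ) ≤ 2 - 2 * ‖(x : V)‖ → τ (t, x) = t := by
    intro t x h
    simp [τ, min_eq_left h]
  refine ⟨(H : C(I × UnitBall V, Z)).comp (τ.prodMk radialHomotopy),
    fun x => ?_, fun t x => ?_, fun p => hHY _, fun x => ?_⟩
  · have : τ (0, x) = 0 := hτ 0 x (by simpa using norm_le x)
    simp [this, hb_in _ (norm_radialHomotopy_zero_le x),
      stretch_radialHomotopy_zero]
  · have hx1 : ‖(x : V)‖ = 1 := x.2
    have hτ0 : τ (t, x) = 0 := by simp [τ, hx1, t.2.1, projIcc_left]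
    have hn := norm_radialHomotopy_of_mem_unitSphere t x.2
    have hn' : 2 * ‖(radialHomotopy (t, (x : UnitBall V)) : V)‖ - 1 = t := by
      rw [hn]; ring
    have hx2 : 2⁻¹ ≤ ‖(radialHomotopy (t, (x : UnitBall V)) : V)‖ := by
      rw [hn]; linarith [t.2.1]
    simp [hτ0, hb_out _ hx2, hn', stretch_radialHomotopy_of_mem_unitSphere]
  · rcases le_total ‖(x : V)‖ 2⁻¹ with hx | hx
    · have : τ (1, x) = 1 := hτ 1 x (by norm_num; linarith)
      simpa [this] using hg _
    · exact hHA _ _ (by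
        simpa [radialHomotopy_one] using stretch_mem_unitSphere hx)

theorem exists_extension_homotopy {f : C(UnitBall V, Z)} (hf : ∀ x, f x ∈ Y)
    {φ : C(I × unitSphere V, Z)} (hφ0 : ∀ x, φ (0, x) = f x) (hφY : ∀ p, φ p ∈ Y) :
    ∃ ψ : C(I × UnitBall V, Z), (∀ x, ψ (0, x) = f x) ∧
      (∀ t (x : unitSphere V), ψ (t, x) = φ (t, x)) ∧ ∀ p, ψ p ∈ Y :=
  let ⟨ψ, hψ0, hψ, hψY, _⟩ := (compressible_self Y _).hasHELP f φ hf hφ0 hφY fun _ => hφY _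
  ⟨ψ, hψ0, hψ, hψY⟩

theorem IsPairMap.exists_homotopicWith {f : C(UnitBall V, Z)} (hAY : A ⊆ Y)
    (hf : IsPairMap A Y (unitSphere V) f) {φ : C(I × unitSphere V, Z)}
    (hφ0 : ∀ x, φ (0, x) = f x) (hφA : ∀ p, φ p ∈ A) :
    ∃ g : C(UnitBall V, Z), f.HomotopicWith g (IsPairMap A Y (unitSphere V)) ∧
      ∀ x : unitSphere V, g x = φ (1, x) := by
  obtain ⟨ψ, hψ0, hψ, hψY⟩ := exists_extension_homotopy hf.1 hφ0 fun p => hAY (hφA p)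
  exact ⟨ψ.comp (.prodMk (.const _ 1) (.id _)), ⟨{
    toContinuousMap := ψ
    map_zero_left := hψ0
    map_one_left := fun _ => rfl
    prop' := fun t => ⟨fun x => hψY (t, x), fun x hx => hψ t ⟨x, hx⟩ ▸ hφA _⟩ }⟩, hψ 1⟩

end HomotopyExtension

section Cube

variable {ι : Type*} [Fintype ι]

theorem mem_unitSphere_pi_iff {x : UnitBall (ι → ℝ)} :
    x ∈ unitSphere (ι → ℝ) ↔ ∃ i, |(x : ι → ℝ) i| = 1 := by
  have hx : ∀ i, |(x : ι → ℝ) i| ≤ 1 := fun i => (norm_le_pi_norm _ i).trans x.norm_le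
  constructor
  · intro (h : ‖(x : ι → ℝ)‖ = 1)
    by_contra! hne
    exact h.not_lt ((pi_norm_lt_iff one_pos).2 fun i => (hx i).lt_of_ne (hne i))
  · rintro ⟨i, hi⟩
    exact x.norm_le.antisymm (hi.ge.trans (norm_le_pi_norm (x : ι → ℝ) i))

/-- The affine homeomorphism from `[-1, 1]^ι` to `[0, 1]^ι`. -/
noncomputable def cubeHomeomorph (ι : Type*) [Fintype ι] : UnitBall (ι → ℝ) ≃ₜ (ι → I) where
  toFun x i := ⟨((x : ι → ℝ) i + 1) / 2, by
    have h := abs_le.1 ((norm_le_pi_norm (x : ι → ℝ) i).trans x.norm_le)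
    exact ⟨by linarith, by linarith⟩⟩
  invFun y := ⟨fun i => 2 * (y i : ℝ) - 1, mem_closedBall_zero_iff.2 <|
    (pi_norm_le_iff_of_nonneg zero_le_one).2 fun i =>
      abs_le.2 ⟨by linarith [(y i).2.1], by linarith [(y i).2.2]⟩⟩
  left_inv x := by ext i; simp; ring
  right_inv y := by ext i; simp
  continuous_toFun := continuous_pi fun i =>
    ((((continuous_apply i).comp continuous_subtype_val).add_const 1).div_const 2).subtype_mk _
  continuous_invFun := .subtype_mk (by fun_prop) _

theorem coe_cubeHomeomorph_apply (x : UnitBall (ι → ℝ)) (i : ι) :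
    (cubeHomeomorph ι x i : ℝ) = ((x : ι → ℝ) i + 1) / 2 := rfl

theorem cubeHomeomorph_mem_boundary_iff {x : UnitBall (ι → ℝ)} :
    cubeHomeomorph ι x ∈ Cube.boundary ι ↔ x ∈ unitSphere (ι → ℝ) := by
  rw [mem_unitSphere_pi_iff]
  refine exists_congr fun i => ?_
  rw [abs_eq zero_le_one, or_comm, Subtype.ext_iff, Subtype.ext_iff, coe_cubeHomeomorph_apply]
  refine or_congr ⟨fun h => ?_, fun h => ?_⟩ ⟨fun h => ?_, fun h => ?_⟩ <;> push_cast at h ⊢ <;>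
    linarith

end Cube

section WeakEquivalence

theorem piMap_zero {X : Type u} {Y : Type v} [TopologicalSpace X] [TopologicalSpace Y] (f : C(X, Y))
    (x : X) : piMap 0 f x = HomotopyGroup.pi0EquivZerothHomotopy.symm ∘ pi0Map f ∘
      HomotopyGroup.pi0EquivZerothHomotopy := by
  ext q
  rw [Function.comp_apply, Equiv.eq_symm_apply]
  induction q using Quotient.inductionOn
  rfl

theorem IsWeakHomotopyEquiv.bijective_piMap {X : Type u} {Y : Type v} [TopologicalSpace X]
    [TopologicalSpace Y] {f : C(X, Y)} (hf : IsWeakHomotopyEquiv f) (n : ℕ) (x : X) :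
    Function.Bijective (piMap n f x) := by
  obtain ⟨_, hpi0, hpi⟩ := hf
  rcases n.eq_zero_or_pos with rfl | hn
  · rw [piMap_zero]
    exact (Equiv.bijective _).comp (hpi0.comp (Equiv.bijective _))
  · exact hpi n hn x

variable {D : Type*} {Z : Type u} [TopologicalSpace D]
  [TopologicalSpace Z] {A Y : Set Z} {S : Set D}

/-- The inclusion of a subspace in a larger one, as a continuous map. -/
def inclusionMap (hAY : A ⊆ Y) : C(A, Y) :=
  ⟨inclusion hAY, continuous_inclusion hAY⟩

theorem exists_homotopicWith_of_surjective_piMap {n : ℕ} (hAY : A ⊆ Y) {a : A}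
    (hsurj : Function.Surjective (piMap n (inclusionMap hAY) a)) (e : D ≃ₜ (Fin n → I))
    (he : ∀ x, e x ∈ Cube.boundary (Fin n) ↔ x ∈ S) {f : C(D, Z)} (hf : ∀ x, f x ∈ Y)
    (hfS : ∀ x ∈ S, f x = a) :
    ∃ g : C(D, Z), (∀ x, g x ∈ A) ∧ f.HomotopicWith g (IsPairMap A Y S) := by
  let q : GenLoop (Fin n) Y (inclusionMap hAY a) :=
    ⟨⟨fun y => ⟨f (e.symm y), hf _⟩, by fun_prop⟩, fun y hy =>
      Subtype.ext (hfS _ ((he _).1 (by rwa [e.apply_symm_apply])))⟩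
  obtain ⟨p, hp⟩ := hsurj (Quotient.mk _ q)
  induction p using Quotient.inductionOn with | h p
  obtain ⟨K⟩ : GenLoop.Homotopic q (genLoopMap (inclusionMap hAY) p) := (Quotient.exact hp).symm
  refine ⟨⟨fun x => (p.1 (e x) : A), by fun_prop⟩, fun x => (p.1 (e x)).2, ⟨{
    toFun := fun z => (K (z.1, e z.2) : Y)
    continuous_toFun := by fun_prop
    map_zero_left := fun x => ?_
    map_one_left := fun x => ?_
    prop' := fun t => ⟨fun x => Subtype.coe_prop _, fun x hx => ?_⟩ }⟩⟩
  · simp [q]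
  · exact congrArg Subtype.val (K.apply_one (e x))
  · have := K.eq_fst t ((he x).2 hx)
    simp [this, q, hfS x hx]

end WeakEquivalence

section SphereHomotopy

variable {V : Type*} [NormedAddCommGroup V]

theorem mem_unitSphere_prod_iff {x : UnitBall (ℝ × V)} :
    x ∈ unitSphere (ℝ × V) ↔
      ((x : ℝ × V).1 = 1 ∨ (x : ℝ × V).1 = -1) ∨ ‖(x : ℝ × V).2‖ = 1 := by
  have h := max_le_iff.1 x.norm_le
  rw [← abs_eq zero_le_one]
  constructor
  · intro (hx : max |(x : ℝ × V).1| ‖(x : ℝ × V).2‖ = 1)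
    exact (max_choice |(x : ℝ × V).1| ‖(x : ℝ × V).2‖).imp (·.symm.trans hx) (·.symm.trans hx)
  · rintro (hx | hx)
    · exact (max_eq_left (h.2.trans hx.ge)).trans hx
    · exact (max_eq_right (h.1.trans hx.ge)).trans hx

theorem max_abs_norm_eq_one (x : unitSphere (ℝ × V)) :
    max |(x : ℝ × V).1| ‖(x : ℝ × V).2‖ = 1 :=
  x.2

/-- Equal to `0` at the centre of the top face `{1} × V` of the sphere and to `1` off its
interior. -/
noncomputable def topFaceDepth (x : unitSphere (ℝ × V)) : ℝ :=
  min 1 (‖(x : ℝ × V).2‖ + (1 - (x : ℝ × V).1))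

theorem topFaceDepth_mem_Icc (x : unitSphere (ℝ × V)) : topFaceDepth x ∈ Icc (0 : ℝ) 1 := by
  have h := le_of_abs_le ((le_max_left _ _).trans (max_abs_norm_eq_one x).le)
  exact ⟨le_min zero_le_one (add_nonneg (norm_nonneg _) (by linarith)), min_le_left _ _⟩

theorem topFaceDepth_eq_one {x : unitSphere (ℝ × V)}
    (hx : (x : ℝ × V).1 = -1 ∨ ‖(x : ℝ × V).2‖ = 1) : topFaceDepth x = 1 := by
  have h := le_of_abs_le ((le_max_left _ _).trans (max_abs_norm_eq_one x).le)
  refine min_eq_left ?_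
  rcases hx with hx | hx
  · linarith [norm_nonneg (x : ℝ × V).2]
  · linarith

variable [NormedSpace ℝ V]

/-- A homotopy, avoiding the origin, which drags all of the sphere of `ℝ × V` except the interior of
the top face `{1} × V` to the bottom `(-1, 0)`. -/
noncomputable def topFaceDrag : C(I × unitSphere (ℝ × V), ℝ × V) where
  toFun p := ((1 - p.1) * (p.2 : ℝ × V).1 + p.1 * (1 - 2 * topFaceDepth p.2),
    (1 - p.1 * topFaceDepth p.2 : ℝ) • (p.2 : ℝ × V).2)
  continuous_toFun := by
    unfold topFaceDepth
    fun_prop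

theorem topFaceDrag_ne_zero (t : I) (x : unitSphere (ℝ × V)) : topFaceDrag (t, x) ≠ 0 := by
  intro h
  obtain ⟨h1, h2⟩ := Prod.ext_iff.1 h
  have hq := topFaceDepth_mem_Icc x
  have hs := max_abs_norm_eq_one x
  simp only [topFaceDrag, ContinuousMap.coe_mk, Prod.fst_zero, Prod.snd_zero, smul_eq_zero] at h1 h2
  rcases h2 with h2 | h2
  · have ht : (t : ℝ) = 1 := by nlinarith [t.2.1, t.2.2, hq.1, hq.2]
    rw [ht] at h1 h2
    linarith
  · rw [h2, norm_zero, max_eq_left (abs_nonneg _), abs_eq zero_le_one] at hs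
    rcases hs with hs | hs
    · have : topFaceDepth x = 0 := by simp [topFaceDepth, h2, hs]
      rw [hs, this] at h1
      linarith
    · rw [hs, topFaceDepth_eq_one (.inl hs)] at h1
      linarith

theorem exists_sphere_homotopy (V : Type*) [NormedAddCommGroup V] [NormedSpace ℝ V] :
    ∃ h : C(I × unitSphere (ℝ × V), unitSphere (ℝ × V)), (∀ x, h (0, x) = x) ∧
      ∀ x : unitSphere (ℝ × V), (x : ℝ × V).1 = -1 ∨ ‖(x : ℝ × V).2‖ = 1 →
        (h (1, x) : ℝ × V) = (-1, 0) := by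
  have hk : ∀ p : I × unitSphere (ℝ × V), ‖topFaceDrag p‖ ≠ 0 := fun p =>
    norm_ne_zero_iff.2 (topFaceDrag_ne_zero p.1 p.2)
  have hn : ∀ p : I × unitSphere (ℝ × V), ‖‖topFaceDrag p‖⁻¹ • topFaceDrag p‖ = 1 := fun p => by
    rw [norm_smul, norm_inv, norm_norm, inv_mul_cancel₀ (hk p)]
  refine ⟨⟨fun p => ⟨⟨‖topFaceDrag p‖⁻¹ • topFaceDrag p, mem_closedBall_zero_iff.2 (hn p).le⟩,
    hn p⟩, ?_⟩, fun x => ?_, fun x hx => ?_⟩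
  · exact .subtype_mk (.subtype_mk (.smul (.inv₀ (by fun_prop) hk) (by fun_prop)) _) _
  · have h0 : topFaceDrag (0, x) = (x : ℝ × V) := by simp [topFaceDrag]
    have h1 : ‖(x : ℝ × V)‖ = 1 := x.2
    ext1; ext1
    simp [h0, h1]
  · have h1 : topFaceDrag (1, x) = ((-1, 0) : ℝ × V) := by
      norm_num [topFaceDrag, topFaceDepth_eq_one hx]
    simp [h1]

end SphereHomotopy

section WeakEquivalenceCompressible

variable {Z : Type u} [TopologicalSpace Z] {A Y : Set Z}

theorem exists_homotopicWith_const_on_lateral_faces {V : Type*} [NormedAddCommGroup V]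
    [NormedSpace ℝ V] (hAY : A ⊆ Y) {f : C(UnitBall (ℝ × V), Z)}
    (hf : IsPairMap A Y (unitSphere (ℝ × V)) f) :
    ∃ (g : C(UnitBall (ℝ × V), Z)) (a : A),
      f.HomotopicWith g (IsPairMap A Y (unitSphere (ℝ × V))) ∧
      ∀ x : unitSphere (ℝ × V), (x : ℝ × V).1 = -1 ∨ ‖(x : ℝ × V).2‖ = 1 → g x = a := by
  obtain ⟨h, h0, h1⟩ := exists_sphere_homotopy V
  obtain ⟨g, hfg, hg⟩ := hf.exists_homotopicWith hAY (φ := ⟨fun p => f (h p), by fun_prop⟩)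
    (fun x => by simp [h0]) fun p => hf.2 (h p).2
  let bottom : UnitBall (ℝ × V) := ⟨(-1, 0), by simp⟩
  have hbottom : bottom ∈ unitSphere (ℝ × V) := by simp [unitSphere, bottom]
  refine ⟨g, ⟨f bottom, hf.2 hbottom⟩, hfg, fun x hx => ?_⟩
  rw [hg]
  exact congrArg f (Subtype.ext (h1 x hx))

/-- The top face is a loop in `A`, and the map itself exhibits it as null-homotopic in `Y`. -/
theorem exists_top_face_nullhomotopy {m : ℕ} (hAY : A ⊆ Y) {a : A}
    (hinj : Function.Injective (piMap m (inclusionMap hAY) a))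
    {f : C(UnitBall (ℝ × (Fin m → ℝ)), Z)} (hf : IsPairMap A Y (unitSphere _) f)
    (ha : ∀ x : unitSphere (ℝ × (Fin m → ℝ)),
      (x : ℝ × (Fin m → ℝ)).1 = -1 ∨ ‖(x : ℝ × (Fin m → ℝ)).2‖ = 1 → f x = a) :
    ∃ N : C(I × UnitBall (Fin m → ℝ), A),
      (∀ (x : UnitBall (ℝ × (Fin m → ℝ))) (y : UnitBall (Fin m → ℝ)),
        (x : ℝ × (Fin m → ℝ)) = (1, (y : Fin m → ℝ)) → N (0, y) = f x) ∧
      (∀ y, N (1, y) = a) ∧ ∀ t, ∀ y ∈ unitSphere (Fin m → ℝ), N (t, y) = a := by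
  let prism : C(I × (Fin m → I), UnitBall (ℝ × (Fin m → ℝ))) :=
    ⟨fun z => ⟨(1 - 2 * z.1, ((cubeHomeomorph (Fin m)).symm z.2 : Fin m → ℝ)),
      mem_closedBall_zero_iff.2 (max_le (abs_le.2 ⟨by linarith [z.1.2.2], by linarith [z.1.2.1]⟩)
        (UnitBall.norm_le _))⟩, by fun_prop⟩
  have hside : ∀ t, ∀ y ∈ Cube.boundary (Fin m), f (prism (t, y)) = a := fun t y hy => by
    have hy' : (cubeHomeomorph (Fin m)).symm y ∈ unitSphere _ :=
      cubeHomeomorph_mem_boundary_iff.1 (by rwa [Homeomorph.apply_symm_apply])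
    exact ha ⟨prism (t, y), mem_unitSphere_prod_iff.2 (.inr hy')⟩ (.inr hy')
  have hbottom : ∀ y, f (prism (1, y)) = a := fun y => by
    have hy : (prism (1, y) : ℝ × (Fin m → ℝ)).1 = -1 := by norm_num [prism]
    exact ha ⟨prism (1, y), mem_unitSphere_prod_iff.2 (.inl (.inr hy))⟩ (.inl hy)
  have htop : ∀ y, prism (0, y) ∈ unitSphere _ := fun y =>
    mem_unitSphere_prod_iff.2 (.inl (.inl (by simp [prism])))
  let p : GenLoop (Fin m) A a := ⟨⟨fun y => ⟨f (prism (0, y)), hf.2 (htop y)⟩, by fun_prop⟩,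
    fun y hy => Subtype.ext (hside 0 y hy)⟩
  have hp : GenLoop.Homotopic (genLoopMap (inclusionMap hAY) p)
      (genLoopMap (inclusionMap hAY) GenLoop.const) := ⟨{
    toFun := fun z => ⟨f (prism z), hf.1 _⟩
    continuous_toFun := by fun_prop
    map_zero_left := fun y => rfl
    map_one_left := fun y => Subtype.ext (hbottom y)
    prop' := fun t y hy => Subtype.ext ((hside t y hy).trans (hside 0 y hy).symm) }⟩
  obtain ⟨N⟩ : GenLoop.Homotopic p GenLoop.const :=
    Quotient.exact (@hinj (Quotient.mk _ p) (Quotient.mk _ GenLoop.const) (Quotient.sound hp))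
  refine ⟨⟨fun z => N (z.1, cubeHomeomorph _ z.2), by fun_prop⟩, fun x y hxy => ?_, fun y => ?_,
    fun t y hy => ?_⟩
  · have : prism (0, cubeHomeomorph _ y) = x := Subtype.ext (by simp [prism, hxy])
    exact (congrArg Subtype.val (N.apply_zero _)).trans (congrArg f this)
  · exact N.apply_one _
  · exact (N.eq_fst t (cubeHomeomorph_mem_boundary_iff.2 hy)).trans
      (Subtype.ext (hside 0 _ (cubeHomeomorph_mem_boundary_iff.2 hy)))

theorem exists_homotopicWith_const_on_sphere {m : ℕ} (hAY : A ⊆ Y) {a : A}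
    (hinj : Function.Injective (piMap m (inclusionMap hAY) a))
    {f : C(UnitBall (ℝ × (Fin m → ℝ)), Z)} (hf : IsPairMap A Y (unitSphere _) f)
    (ha : ∀ x : unitSphere (ℝ × (Fin m → ℝ)),
      (x : ℝ × (Fin m → ℝ)).1 = -1 ∨ ‖(x : ℝ × (Fin m → ℝ)).2‖ = 1 → f x = a) :
    ∃ g : C(UnitBall (ℝ × (Fin m → ℝ)), Z), f.HomotopicWith g (IsPairMap A Y (unitSphere _)) ∧
      ∀ x ∈ unitSphere _, g x = a := by
  obtain ⟨N, hN0, hN1, hN⟩ := exists_top_face_nullhomotopy hAY hinj hf ha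
  let proj : C(UnitBall (ℝ × (Fin m → ℝ)), UnitBall (Fin m → ℝ)) :=
    ⟨fun x => ⟨(x : ℝ × (Fin m → ℝ)).2, mem_closedBall_zero_iff.2
      ((le_max_right _ _).trans x.norm_le)⟩, by fun_prop⟩
  obtain ⟨φ, hφ_top, hφ⟩ := exists_continuousMap_of_isClosed_cover
    (s := {z : I × unitSphere (ℝ × (Fin m → ℝ)) | (z.2 : ℝ × (Fin m → ℝ)).1 = 1})
    (t := {z | (z.2 : ℝ × (Fin m → ℝ)).1 = -1 ∨ ‖(z.2 : ℝ × (Fin m → ℝ)).2‖ = 1})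
    (isClosed_eq (by fun_prop) (by fun_prop))
    ((isClosed_eq (by fun_prop) (by fun_prop)).union (isClosed_eq (by fun_prop) (by fun_prop)))
    (fun z => or_assoc.1 (mem_unitSphere_prod_iff.1 z.2.2))
    (N.comp ⟨fun z => (z.1.1, proj z.1.2), by fun_prop⟩) (.const _ a) fun z hz hz' => by
      have hz2 : ‖(z.2 : ℝ × (Fin m → ℝ)).2‖ = 1 := hz'.resolve_left fun h => by
        norm_num [h] at hz
      exact hN _ _ hz2
  have hφ_eq : ∀ t (x : unitSphere _), ((x : ℝ × (Fin m → ℝ)).1 = 1 → φ (t, x) = N (t, proj x)) ∧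
      ((x : ℝ × (Fin m → ℝ)).1 = -1 ∨ ‖(x : ℝ × (Fin m → ℝ)).2‖ = 1 → φ (t, x) = a) :=
    fun t x => ⟨fun h => hφ_top ⟨(t, x), h⟩, fun h => hφ ⟨(t, x), h⟩⟩
  have hφ0 : ∀ x : unitSphere (ℝ × (Fin m → ℝ)), (φ (0, x) : Z) = f x := fun x => by
    rcases or_assoc.1 (mem_unitSphere_prod_iff.1 x.2) with h | h
    · exact (congrArg Subtype.val ((hφ_eq 0 x).1 h)).trans (hN0 _ _ (Prod.ext h rfl))
    · exact (congrArg Subtype.val ((hφ_eq 0 x).2 h)).trans (ha x h).symm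
  obtain ⟨g, hfg, hg⟩ := hf.exists_homotopicWith hAY (φ := ⟨fun z => φ z, by fun_prop⟩) hφ0
    fun z => (φ z).2
  refine ⟨g, hfg, fun x hx => (hg ⟨x, hx⟩).trans (congrArg Subtype.val ?_)⟩
  rcases or_assoc.1 (mem_unitSphere_prod_iff.1 hx) with h | h
  · exact ((hφ_eq 1 ⟨x, hx⟩).1 h).trans (hN1 _)
  · exact (hφ_eq 1 ⟨x, hx⟩).2 h

/-- The isometry between `ℝ × ℝ^m` and `ℝ^(m+1)`, with supremum norms. -/
def consIsometry (m : ℕ) : (ℝ × (Fin m → ℝ)) ≃ₗᵢ[ℝ] (Fin (m + 1) → ℝ) where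
  __ := Fin.consLinearEquiv ℝ fun _ => ℝ
  norm_map' x := by
    change ‖(Fin.cons x.1 x.2 : Fin (m + 1) → ℝ)‖ = max ‖x.1‖ ‖x.2‖
    refine le_antisymm ((pi_norm_le_iff_of_nonneg (norm_nonneg x)).2 (Fin.cases ?_ fun i => ?_))
      (max_le (norm_le_pi_norm (Fin.cons x.1 x.2 : Fin (m + 1) → ℝ) 0)
        ((pi_norm_le_iff_of_nonneg (norm_nonneg _)).2 fun i =>
          norm_le_pi_norm (Fin.cons x.1 x.2 : Fin (m + 1) → ℝ) i.succ))
    · exact le_max_left _ _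
    · exact (norm_le_pi_norm x.2 i).trans (le_max_right _ _)

/-- The homeomorphism of unit balls induced by a linear isometry. -/
def UnitBall.congr {V W : Type*} [NormedAddCommGroup V] [NormedSpace ℝ V] [NormedAddCommGroup W]
    [NormedSpace ℝ W] (e : V ≃ₗᵢ[ℝ] W) : UnitBall V ≃ₜ UnitBall W :=
  e.toHomeomorph.subtype fun x => by simp

theorem UnitBall.congr_mem_unitSphere_iff {V W : Type*} [NormedAddCommGroup V] [NormedSpace ℝ V]
    [NormedAddCommGroup W] [NormedSpace ℝ W] (e : V ≃ₗᵢ[ℝ] W) {x : UnitBall V} :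
    UnitBall.congr e x ∈ unitSphere W ↔ x ∈ unitSphere V := by
  change ‖e (x : V)‖ = 1 ↔ ‖(x : V)‖ = 1
  rw [e.norm_map]

theorem IsWeakHomotopyEquiv.compressible {hAY : A ⊆ Y}
    (h : IsWeakHomotopyEquiv (inclusion hAY)) (n : ℕ) :
    Compressible A Y (unitSphere (Fin n → ℝ)) := by
  have hpi : ∀ n a, Function.Bijective (piMap n (inclusionMap hAY) a) :=
    fun n a => IsWeakHomotopyEquiv.bijective_piMap (f := inclusionMap hAY) h n a
  rcases n with _ | m
  · intro f hf
    obtain ⟨_, hpi0, _⟩ := h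
    obtain ⟨q, -⟩ := hpi0.2 (Quotient.mk _ ⟨f 0, hf.1 0⟩)
    induction q using Quotient.inductionOn with | h a
    exact exists_homotopicWith_of_surjective_piMap hAY (hpi 0 a).2 (cubeHomeomorph _)
      (fun x => cubeHomeomorph_mem_boundary_iff) hf.1
      fun x hx => (mem_unitSphere_pi_iff.1 hx).elim fun i => i.elim0
  · let e := UnitBall.congr (consIsometry m)
    have he : ∀ x, e x ∈ unitSphere _ ↔ x ∈ unitSphere _ := fun x =>
      UnitBall.congr_mem_unitSphere_iff (consIsometry m)
    refine Compressible.of_homeomorph (fun f hf => ?_) e he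
    obtain ⟨f₁, a, h₁, hf₁⟩ := exists_homotopicWith_const_on_lateral_faces hAY hf
    have hp₁ := IsPairMap.of_homotopicWith h₁
    obtain ⟨f₂, h₂, hf₂⟩ := exists_homotopicWith_const_on_sphere hAY (hpi m a).1 hp₁ hf₁
    have hp₂ := IsPairMap.of_homotopicWith h₂
    obtain ⟨g, hg, h₃⟩ := exists_homotopicWith_of_surjective_piMap hAY (hpi (m + 1) a).2
      (e.trans (cubeHomeomorph _)) (fun x => cubeHomeomorph_mem_boundary_iff.trans (he x))
      hp₂.1 hf₂
    exact ⟨g, hg, (h₁.trans h₂).trans h₃⟩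

end WeakEquivalenceCompressible

section GridCells

variable {ι : Type*}

/-- The smallest cell containing `x` of the subdivision of `ℝ^ι` by the integral grid. -/
def gridCell (x : ι → ℝ) : Set (ι → ℝ) :=
  Icc (fun i => (⌊x i⌋ : ℝ)) fun i => (⌈x i⌉ : ℝ)

/-- A union of grid cells. -/
def IsGridUnion (A : Set (ι → ℝ)) : Prop :=
  ∀ x ∈ A, gridCell x ⊆ A

variable {x y : ι → ℝ} {A B : Set (ι → ℝ)}

theorem mem_gridCell_self (x : ι → ℝ) : x ∈ gridCell x :=
  ⟨fun i => Int.floor_le (x i), fun i => Int.le_ceil (x i)⟩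

theorem gridCell_subset_gridCell (hy : y ∈ gridCell x) : gridCell y ⊆ gridCell x :=
  Icc_subset_Icc (fun i => Int.cast_le.2 (Int.le_floor.2 (hy.1 i)))
    fun i => Int.cast_le.2 (Int.ceil_le.2 (hy.2 i))

theorem abs_sub_le_one_of_mem_gridCell (hy : y ∈ gridCell x) (i : ι) : |y i - x i| ≤ 1 := by
  have h1 : (⌊x i⌋ : ℝ) ≤ y i := hy.1 i
  have h2 : y i ≤ ⌈x i⌉ := hy.2 i
  rw [abs_le]
  constructor <;> linarith [Int.lt_floor_add_one (x i), Int.ceil_lt_add_one (x i)]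

theorem IsGridUnion.union (hA : IsGridUnion A) (hB : IsGridUnion B) : IsGridUnion (A ∪ B) :=
  fun x hx => hx.elim (fun h => (hA x h).trans subset_union_left)
    fun h => (hB x h).trans subset_union_right

theorem isGridUnion_setOf_gridCell_subset (A : Set (ι → ℝ)) :
    IsGridUnion {x | gridCell x ⊆ A} :=
  fun _ hx _ hy => (gridCell_subset_gridCell hy).trans hx

theorem isGridUnion_setOf_exists_le_abs (N : ℕ) : IsGridUnion {x : ι → ℝ | ∃ i, N ≤ |x i|} := by
  rintro x ⟨i, hi⟩ y hy
  have h1 : (⌊x i⌋ : ℝ) ≤ y i := hy.1 i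
  have h2 : y i ≤ ⌈x i⌉ := hy.2 i
  refine ⟨i, (le_abs.1 hi).elim (fun h => ?_) fun h => ?_⟩
  · have : ((N : ℤ) : ℝ) ≤ ⌊x i⌋ := Int.cast_le.2 (Int.le_floor.2 (mod_cast h))
    exact (this.trans h1).trans (le_abs_self _)
  · have : (⌈x i⌉ : ℝ) ≤ ((-N : ℤ) : ℝ) := Int.cast_le.2 (Int.ceil_le.2 (by push_cast; linarith))
    push_cast at this
    exact le_abs.2 (.inr (by linarith))

section Finite

variable [Finite ι]

theorem locallyFinite_gridCell : LocallyFinite fun c : range (gridCell (ι := ι)) => c.1 := by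
  cases nonempty_fintype ι
  classical
  intro x
  refine ⟨ball x 1, ball_mem_nhds x one_pos, ?_⟩
  let box : Set (ι → ℤ) := Icc (fun i => ⌊x i⌋ - 3) fun i => ⌈x i⌉ + 3
  have hfin : ((fun p : (ι → ℤ) × (ι → ℤ) =>
      Icc (fun i => (p.1 i : ℝ)) fun i => (p.2 i : ℝ)) '' (box ×ˢ box)).Finite :=
    ((finite_Icc _ _).prod (finite_Icc _ _)).image _
  refine (hfin.preimage Subtype.val_injective.injOn).subset ?_
  rintro ⟨_, y, rfl⟩ ⟨w, hw, hwx⟩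
  have hyx : ∀ i, x i - 2 < y i ∧ y i < x i + 2 := fun i => by
    have h1 := abs_le.1 (abs_sub_le_one_of_mem_gridCell hw i)
    have h2 := abs_lt.1 ((dist_le_pi_dist w x i).trans_lt hwx)
    constructor <;> linarith [h1.1, h1.2, h2.1, h2.2]
  have hfloor : ∀ i, ⌊x i⌋ - 3 ≤ ⌊y i⌋ := fun i => Int.le_floor.2 (by
    push_cast
    linarith [(hyx i).1, Int.floor_le (x i)])
  have hceil : ∀ i, ⌈y i⌉ ≤ ⌈x i⌉ + 3 := fun i => Int.ceil_le.2 (by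
    push_cast
    linarith [(hyx i).2, Int.le_ceil (x i)])
  have hle : ∀ i, ⌊y i⌋ ≤ ⌈y i⌉ := fun i => Int.floor_le_ceil _
  exact ⟨(fun i => ⌊y i⌋, fun i => ⌈y i⌉), ⟨⟨hfloor, fun i => (hle i).trans (hceil i)⟩,
    fun i => (hfloor i).trans (hle i), hceil⟩, rfl⟩

theorem IsGridUnion.continuousOn_preimage {X Y : Type*} [TopologicalSpace X] [TopologicalSpace Y]
    (hA : IsGridUnion A) {p : X → ι → ℝ} (hp : Continuous p) {φ : X → Y}
    (h : ∀ x ∈ A, ContinuousOn φ (p ⁻¹' gridCell x)) : ContinuousOn φ (p ⁻¹' A) := by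
  have hcells : LocallyFinite fun c : {c : range (gridCell (ι := ι)) // c.1 ⊆ A} =>
      p ⁻¹' c.1.1 :=
    (locallyFinite_gridCell.comp_injective Subtype.val_injective).preimage_continuous hp
  refine (hcells.continuousOn_iUnion ?_ ?_).mono fun z hz => mem_iUnion.2
    ⟨⟨⟨_, mem_range_self (p z)⟩, hA _ hz⟩, mem_gridCell_self (p z)⟩
  · rintro ⟨⟨_, x, rfl⟩, -⟩
    exact isClosed_Icc.preimage hp
  · rintro ⟨⟨_, x, rfl⟩, hx⟩
    exact h x (hx (mem_gridCell_self x))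

end Finite

variable [Fintype ι]

open Classical in
/-- The directions in which the grid cell of `x` extends. -/
noncomputable def freeDirections (x : ι → ℝ) : Finset ι :=
  {i | x i ∉ range ((↑) : ℤ → ℝ)}

/-- The dimension of the grid cell of `x`. -/
noncomputable def gridDim (x : ι → ℝ) : ℕ :=
  (freeDirections x).card

/-- The boundary of the grid cell of `x`: the union of its proper faces. -/
def gridBoundary (x : ι → ℝ) : Set (ι → ℝ) :=
  {y ∈ gridCell x | gridDim y < gridDim x}

theorem mem_freeDirections {i : ι} : i ∈ freeDirections x ↔ x i ∉ range ((↑) : ℤ → ℝ) := by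
  simp [freeDirections]

theorem ceil_of_mem_freeDirections {i : ι} (hi : i ∈ freeDirections x) : ⌈x i⌉ = ⌊x i⌋ + 1 :=
  (Int.ceil_eq_floor_add_one_iff_notMem _).2 (mem_freeDirections.1 hi)

theorem eq_of_mem_gridCell {i : ι} (hi : i ∉ freeDirections x) (hy : y ∈ gridCell x) :
    y i = x i := by
  obtain ⟨z, hz⟩ := not_not.1 (mt mem_freeDirections.2 hi)
  have h1 := hy.1 i
  have h2 := hy.2 i
  simp only [← hz, Int.floor_intCast, Int.ceil_intCast] at h1 h2 ⊢
  exact h2.antisymm h1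

theorem freeDirections_subset (hy : y ∈ gridCell x) : freeDirections y ⊆ freeDirections x :=
  fun i hi => by
    by_contra hix
    rw [mem_freeDirections, eq_of_mem_gridCell hix hy] at hi
    exact hix (mem_freeDirections.2 hi)

theorem floor_eq_of_mem_gridCell {i : ι} (hi : i ∈ freeDirections y) (hy : y ∈ gridCell x) :
    ⌊y i⌋ = ⌊x i⌋ := by
  have h1 : ⌊x i⌋ ≤ ⌊y i⌋ := Int.le_floor.2 (hy.1 i)
  have h2 : ⌈y i⌉ ≤ ⌈x i⌉ := Int.ceil_le.2 (hy.2 i)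
  rw [ceil_of_mem_freeDirections hi, ceil_of_mem_freeDirections (freeDirections_subset hy hi)] at h2
  omega

theorem gridCell_eq_of_gridDim_le (hy : y ∈ gridCell x) (h : gridDim x ≤ gridDim y) :
    gridCell y = gridCell x := by
  have hfree := Finset.eq_of_subset_of_card_le (freeDirections_subset hy) h
  have hfloor : ∀ i, ⌊y i⌋ = ⌊x i⌋ := fun i => by
    by_cases hi : i ∈ freeDirections y
    · exact floor_eq_of_mem_gridCell hi hy
    · rw [eq_of_mem_gridCell (hfree ▸ hi) hy]
  have hceil : ∀ i, ⌈y i⌉ = ⌈x i⌉ := fun i => by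
    by_cases hi : i ∈ freeDirections y
    · rw [ceil_of_mem_freeDirections hi, ceil_of_mem_freeDirections (hfree ▸ hi), hfloor]
    · rw [eq_of_mem_gridCell (hfree ▸ hi) hy]
  simp only [gridCell, hfloor, hceil]

theorem mem_gridBoundary_iff (hy : y ∈ gridCell x) :
    y ∈ gridBoundary x ↔ ∃ i ∈ freeDirections x, y i = ⌊x i⌋ ∨ y i = ⌊x i⌋ + 1 := by
  have hsub := freeDirections_subset hy
  rw [gridBoundary, mem_sep_iff, and_iff_right hy, gridDim, gridDim]
  constructor
  · intro h
    obtain ⟨i, hi, hiy⟩ := Finset.exists_mem_notMem_of_card_lt_card h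
    obtain ⟨z, hz⟩ := not_not.1 (mt mem_freeDirections.2 hiy)
    have h1 := hy.1 i
    have h2 := hy.2 i
    refine ⟨i, hi, ?_⟩
    simp only [ceil_of_mem_freeDirections hi, ← hz, Int.cast_le] at h1 h2 ⊢
    norm_cast
    omega
  · rintro ⟨i, hi, h⟩
    refine Finset.card_lt_card (Finset.ssubset_iff_of_subset hsub |>.2 ⟨i, hi, fun hiy => ?_⟩)
    refine mem_freeDirections.1 hiy ?_
    rcases h with h | h
    · exact ⟨_, h.symm⟩
    · exact ⟨⌊x i⌋ + 1, by rw [h]; push_cast; rfl⟩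

theorem isGridUnion_setOf_gridDim_lt (k : ℕ) : IsGridUnion {x : ι → ℝ | gridDim x < k} :=
  fun _ hx _ hy => (Finset.card_le_card (freeDirections_subset hy)).trans_lt hx

open Classical in
/-- The chart of a grid cell given by the cube spanned by its directions. -/
noncomputable def gridCellChart (x : ι → ℝ) :
    UnitBall (freeDirections x → ℝ) ≃ₜ gridCell x where
  toFun u := ⟨fun i => if h : i ∈ freeDirections x then
    ⌊x i⌋ + ((u : freeDirections x → ℝ) ⟨i, h⟩ + 1) / 2 else x i, by
      have hu := fun i => abs_le.1 ((norm_le_pi_norm (u : freeDirections x → ℝ) i).trans u.norm_le)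
      refine ⟨fun i => ?_, fun i => ?_⟩ <;> by_cases h : i ∈ freeDirections x <;> simp only [h]
      · simp only [reduceDIte]; linarith [(hu ⟨i, h⟩).1]
      · exact Int.floor_le _
      · simp only [reduceDIte, ceil_of_mem_freeDirections h]; push_cast; linarith [(hu ⟨i, h⟩).2]
      · exact Int.le_ceil _⟩
  invFun y := ⟨fun i => 2 * ((y : ι → ℝ) i - ⌊x i⌋) - 1, by
    refine mem_closedBall_zero_iff.2 ((pi_norm_le_iff_of_nonneg zero_le_one).2 fun i => ?_)
    have h1 : (⌊x i⌋ : ℝ) ≤ (y : ι → ℝ) i := y.2.1 i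
    have h2 : (y : ι → ℝ) i ≤ ⌈x i⌉ := y.2.2 i
    rw [ceil_of_mem_freeDirections i.2] at h2
    push_cast at h2
    rw [Real.norm_eq_abs, abs_le]
    constructor <;> linarith⟩
  left_inv u := by
    ext i
    simp only [i.2, reduceDIte]
    ring
  right_inv y := by
    ext i
    by_cases hi : i ∈ freeDirections x
    · simp only [hi, reduceDIte]
      ring
    · simp only [hi, reduceDIte, eq_of_mem_gridCell hi y.2]
  continuous_toFun := by
    refine .subtype_mk (continuous_pi fun i => ?_) _
    by_cases hi : i ∈ freeDirections x
    · have : Continuous fun u : UnitBall (freeDirections x → ℝ) =>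
          (u : freeDirections x → ℝ) ⟨i, hi⟩ := (continuous_apply _).comp continuous_subtype_val
      simp only [hi, reduceDIte]
      exact ((this.add continuous_const).div_const _).const_add _
    · simp only [hi, reduceDIte]
      exact continuous_const
  continuous_invFun := by
    refine .subtype_mk (continuous_pi fun i => ?_) _
    have : Continuous fun y : gridCell x => (y : ι → ℝ) i :=
      (continuous_apply _).comp continuous_subtype_val
    exact ((this.sub continuous_const).const_mul _).sub continuous_const

theorem gridCellChart_apply_of_mem (u : UnitBall (freeDirections x → ℝ)) (i : freeDirections x) :
    (gridCellChart x u : ι → ℝ) i = ⌊x i⌋ + ((u : freeDirections x → ℝ) i + 1) / 2 :=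
  dif_pos i.2

theorem gridCellChart_mem_gridBoundary_iff {u : UnitBall (freeDirections x → ℝ)} :
    (gridCellChart x u : ι → ℝ) ∈ gridBoundary x ↔ u ∈ unitSphere (freeDirections x → ℝ) := by
  have hface : ∀ i : freeDirections x, (gridCellChart x u : ι → ℝ) i = ⌊x i⌋ ∨
      (gridCellChart x u : ι → ℝ) i = ⌊x i⌋ + 1 ↔ |(u : freeDirections x → ℝ) i| = 1 := fun i => by
    rw [gridCellChart_apply_of_mem, abs_eq zero_le_one]
    constructor <;> rintro (h | h) <;> first | (left; linarith) | (right; linarith)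
  rw [mem_gridBoundary_iff (gridCellChart x u).2, mem_unitSphere_pi_iff]
  exact ⟨fun ⟨i, hi, h⟩ => ⟨⟨i, hi⟩, (hface ⟨i, hi⟩).1 h⟩, fun ⟨i, h⟩ => ⟨i, i.2, (hface i).2 h⟩⟩

end GridCells

section GridDeformation

theorem HasHELP.of_homeomorph {Z D D' : Type*} [TopologicalSpace Z] [TopologicalSpace D]
    [TopologicalSpace D'] {A Y : Set Z} {S : Set D} {S' : Set D'} (h : HasHELP A Y S)
    (e : D ≃ₜ D') (he : ∀ x, e x ∈ S' ↔ x ∈ S) : HasHELP A Y S' := by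
  intro f φ hf hφ0 hφY hφ1
  let e' : C(S, S') := ⟨fun x => ⟨e x, (he x).2 x.2⟩, by fun_prop⟩
  obtain ⟨ψ, hψ0, hψ, hψY, hψ1⟩ := h (f.comp e) (φ.comp ((ContinuousMap.id I).prodMap e'))
    (fun _ => hf _) (fun _ => hφ0 _) (fun _ => hφY _) fun _ => hφ1 _
  refine ⟨ψ.comp ((ContinuousMap.id I).prodMap (e.symm : C(D', D))), fun x => ?_, fun t x => ?_,
    fun _ => hψY _, fun _ => hψ1 _⟩
  · simpa using hψ0 (e.symm x)
  · simpa [e'] using hψ t ⟨e.symm x, by simp [← he]⟩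

variable {ι Z κ : Type*} [TopologicalSpace Z] {Fs : Set Z} {G : κ → Set Z}
  {f : C(ι → ℝ, Z)} {C : κ → Set (ι → ℝ)} {A : Set (ι → ℝ)} {φ : I × (ι → ℝ) → Z}

/-- `φ` is a homotopy, defined over `A`, from `f` to a map into `Fs`, which satisfies the
constraint `G i` over `C i`. -/
structure IsConstrainedHomotopy (Fs : Set Z) (G : κ → Set Z) (f : C(ι → ℝ, Z))
    (C : κ → Set (ι → ℝ)) (A : Set (ι → ℝ)) (φ : I × (ι → ℝ) → Z) : Prop where
  continuousOn : ContinuousOn φ (Prod.snd ⁻¹' A)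
  apply_zero : ∀ x ∈ A, φ (0, x) = f x
  apply_one_mem : ∀ x ∈ A, φ (1, x) ∈ Fs
  apply_mem : ∀ t, ∀ x ∈ A, ∀ i, x ∈ C i → φ (t, x) ∈ G i

theorem IsConstrainedHomotopy.mono {B : Set (ι → ℝ)} (h : IsConstrainedHomotopy Fs G f C A φ)
    (hBA : B ⊆ A) : IsConstrainedHomotopy Fs G f C B φ where
  continuousOn := h.continuousOn.mono (preimage_mono hBA)
  apply_zero x hx := h.apply_zero x (hBA hx)
  apply_one_mem x hx := h.apply_one_mem x (hBA hx)
  apply_mem t x hx := h.apply_mem t x (hBA hx)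

theorem IsConstrainedHomotopy.congr {ψ : I × (ι → ℝ) → Z} (h : IsConstrainedHomotopy Fs G f C A φ)
    (hψ : EqOn ψ φ (Prod.snd ⁻¹' A)) : IsConstrainedHomotopy Fs G f C A ψ where
  continuousOn := h.continuousOn.congr hψ
  apply_zero x hx := (hψ (x := (0, x)) hx).trans (h.apply_zero x hx)
  apply_one_mem x hx := hψ (x := (1, x)) hx ▸ h.apply_one_mem x hx
  apply_mem t x hx := hψ (x := (t, x)) hx ▸ h.apply_mem t x hx

theorem IsConstrainedHomotopy.of_forall_gridCell [Finite ι] (hA : IsGridUnion A)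
    (h : ∀ x ∈ A, IsConstrainedHomotopy Fs G f C (gridCell x) φ) :
    IsConstrainedHomotopy Fs G f C A φ where
  continuousOn := hA.continuousOn_preimage continuous_snd fun x hx => (h x hx).continuousOn
  apply_zero x hx := (h x hx).apply_zero x (mem_gridCell_self x)
  apply_one_mem x hx := (h x hx).apply_one_mem x (mem_gridCell_self x)
  apply_mem t x hx := (h x hx).apply_mem t x (mem_gridCell_self x)

theorem exists_continuousOn_eq_restrict {X Y : Type*} [TopologicalSpace X] [TopologicalSpace Y]
    {s : Set X} (f : X → Y) (ψ : C(I × s, Y)) :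
    ∃ Ψ : I × X → Y, ContinuousOn Ψ (Prod.snd ⁻¹' s) ∧ ∀ t (x : s), Ψ (t, x) = ψ (t, x) := by
  classical
  refine ⟨fun p => if h : p.2 ∈ s then ψ (p.1, ⟨p.2, h⟩) else f p.2, ?_, fun t x => by simp⟩
  rw [continuousOn_iff_continuous_domRestrict]
  have : Continuous fun p : (Prod.snd ⁻¹' s : Set (I × X)) => ψ (p.1.1, ⟨p.1.2, p.2⟩) := by
    fun_prop
  refine this.congr fun p => ?_
  simp [show p.1.2 ∈ s from p.2]

section Fintype

variable [Fintype ι]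

theorem Compressible.hasHELP_gridCell {A Y : Set Z} {x : ι → ℝ}
    (h : Compressible A Y (unitSphere (Fin (gridDim x) → ℝ))) :
    HasHELP A Y (Subtype.val ⁻¹' gridBoundary x : Set (gridCell x)) :=
  let e : (Fin (gridDim x) → ℝ) ≃ₗᵢ[ℝ] (freeDirections x → ℝ) :=
    ⟨LinearEquiv.funCongrLeft ℝ ℝ (freeDirections x).equivFin, fun u => by
      rw [← dist_zero_right, ← dist_zero_right]
      exact (IsometryEquiv.piCongrLeft' (Y := fun _ => ℝ)
        (freeDirections x).equivFin.symm).dist_eq u 0⟩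
  (h.of_homeomorph (UnitBall.congr e)
    fun _ => UnitBall.congr_mem_unitSphere_iff e).hasHELP.of_homeomorph
      (gridCellChart x) fun _ => gridCellChart_mem_gridBoundary_iff

/-- Over the interior of the cell only those constraints matter which hold on the whole cell. -/
theorem IsConstrainedHomotopy.exists_extension_gridCell
    (hcomp : ∀ S : Set κ, S.Nonempty → ∀ n,
      Compressible (Fs ∩ ⋂ i ∈ S, G i) (⋂ i ∈ S, G i) (unitSphere (Fin n → ℝ)))
    (hC : ∀ i, IsGridUnion (C i)) (hcover : ∀ x, ∃ i, x ∈ C i) (hfG : ∀ i, MapsTo f (C i) (G i))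
    {x : ι → ℝ} (h : IsConstrainedHomotopy Fs G f C (gridBoundary x) φ) :
    ∃ ψ, IsConstrainedHomotopy Fs G f C (gridCell x) ψ ∧
      EqOn ψ φ (Prod.snd ⁻¹' gridBoundary x) := by
  let S : Set κ := {i | gridCell x ⊆ C i}
  have hS : S.Nonempty := (hcover x).imp fun i hi => hC i x hi
  let bd : Set (gridCell x) := Subtype.val ⁻¹' gridBoundary x
  let φ' : C(I × bd, Z) := ⟨fun p => φ (p.1, p.2.1.1),
    h.continuousOn.comp_continuous (by fun_prop) fun p => p.2.2⟩
  obtain ⟨ψ, hψ0, hψφ, hψY, hψ1⟩ := (hcomp S hS _).hasHELP_gridCell (f.restrict (gridCell x)) φ'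
    (fun y => mem_iInter₂.2 fun i hi => hfG i (hi y.2)) (fun y => h.apply_zero _ y.2)
    (fun p => mem_iInter₂.2 fun i hi => h.apply_mem _ _ p.2.2 i (hi p.2.1.2))
    fun y => ⟨h.apply_one_mem _ y.2,
      mem_iInter₂.2 fun i hi => h.apply_mem _ _ y.2 i (hi y.1.2)⟩
  obtain ⟨Ψ, hΨ, hΨψ⟩ := exists_continuousOn_eq_restrict f ψ
  have hΨφ : EqOn Ψ φ (Prod.snd ⁻¹' gridBoundary x) := fun p hp =>
    (hΨψ p.1 ⟨p.2, hp.1⟩).trans (hψφ p.1 ⟨⟨p.2, hp.1⟩, hp⟩)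
  refine ⟨Ψ, ⟨hΨ, fun y hy => ?_, fun y hy => ?_, fun t y hy i hi => ?_⟩, hΨφ⟩
  · exact (hΨψ 0 ⟨y, hy⟩).trans (hψ0 ⟨y, hy⟩)
  · exact hΨψ 1 ⟨y, hy⟩ ▸ (hψ1 ⟨y, hy⟩).1
  · rcases lt_or_ge (gridDim y) (gridDim x) with hyx | hxy
    · rw [hΨφ (show (t, y) ∈ Prod.snd ⁻¹' gridBoundary x from ⟨hy, hyx⟩)]
      exact h.apply_mem t y ⟨hy, hyx⟩ i hi
    · rw [hΨψ t ⟨y, hy⟩]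
      have hiS : gridCell x ⊆ C i := gridCell_eq_of_gridDim_le hy hxy ▸ hC i y hi
      exact mem_iInter₂.1 (hψY _) i hiS

theorem IsConstrainedHomotopy.exists_extension_gridCell_of_isGridUnion
    (hcomp : ∀ S : Set κ, S.Nonempty → ∀ n,
      Compressible (Fs ∩ ⋂ i ∈ S, G i) (⋂ i ∈ S, G i) (unitSphere (Fin n → ℝ)))
    (hC : ∀ i, IsGridUnion (C i)) (hcover : ∀ x, ∃ i, x ∈ C i) (hfG : ∀ i, MapsTo f (C i) (G i))
    (hA : IsGridUnion A) (h : IsConstrainedHomotopy Fs G f C A φ) {x : ι → ℝ}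
    (hx : gridBoundary x ⊆ A) :
    ∃ ψ, IsConstrainedHomotopy Fs G f C (gridCell x) ψ ∧
      EqOn ψ φ (Prod.snd ⁻¹' (gridCell x ∩ A)) := by
  by_cases hxA : gridCell x ⊆ A
  · exact ⟨φ, h.mono hxA, fun _ _ => rfl⟩
  · obtain ⟨ψ, hψ, hψφ⟩ := exists_extension_gridCell hcomp hC hcover hfG (h.mono hx)
    have hsub : gridCell x ∩ A ⊆ gridBoundary x := fun y hy => ⟨hy.1, not_le.1 fun hxy =>
      hxA (gridCell_eq_of_gridDim_le hy.1 hxy ▸ hA y hy.2)⟩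
    exact ⟨ψ, hψ, hψφ.mono (preimage_mono hsub)⟩

theorem IsConstrainedHomotopy.exists_extension_skeleton_succ
    (hcomp : ∀ S : Set κ, S.Nonempty → ∀ n,
      Compressible (Fs ∩ ⋂ i ∈ S, G i) (⋂ i ∈ S, G i) (unitSphere (Fin n → ℝ)))
    (hC : ∀ i, IsGridUnion (C i)) (hcover : ∀ x, ∃ i, x ∈ C i) (hfG : ∀ i, MapsTo f (C i) (G i))
    (hA : IsGridUnion A) {k : ℕ} (hk : ∀ x, gridDim x < k → x ∈ A)
    (h : IsConstrainedHomotopy Fs G f C A φ) :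
    ∃ ψ, IsConstrainedHomotopy Fs G f C (A ∪ {x | gridDim x < k + 1}) ψ ∧
      EqOn ψ φ (Prod.snd ⁻¹' A) := by
  classical
  have hcell : ∀ c ∈ gridCell '' {x : ι → ℝ | gridDim x ≤ k}, ∃ ψ,
      IsConstrainedHomotopy Fs G f C c ψ ∧ EqOn ψ φ (Prod.snd ⁻¹' (c ∩ A)) := by
    rintro _ ⟨x, hx, rfl⟩
    exact h.exists_extension_gridCell_of_isGridUnion hcomp hC hcover hfG hA
      fun y hy => hk y (hy.2.trans_le hx)
  have : Nonempty (I × (ι → ℝ) → Z) := ⟨φ⟩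
  choose! Ψ hΨ hΨφ using hcell
  let ψ : I × (ι → ℝ) → Z := fun p => if p.2 ∈ A then φ p else Ψ (gridCell p.2) p
  have hψφ : EqOn ψ φ (Prod.snd ⁻¹' A) := fun _ hp => if_pos hp
  have hψΨ : ∀ x, gridDim x ≤ k → EqOn ψ (Ψ (gridCell x)) (Prod.snd ⁻¹' gridCell x) := by
    intro x hx p hp
    by_cases hpA : p.2 ∈ A
    · exact (if_pos hpA).trans (hΨφ _ ⟨x, hx, rfl⟩ ⟨hp, hpA⟩).symm
    · have hpk : k ≤ gridDim p.2 := not_lt.1 fun hlt => hpA (hk _ hlt)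
      rw [← gridCell_eq_of_gridDim_le hp (le_trans hx hpk)]
      exact if_neg hpA
  refine ⟨ψ, .of_forall_gridCell (hA.union (isGridUnion_setOf_gridDim_lt _)) ?_, hψφ⟩
  rintro x (hx | hx)
  · exact (h.mono (hA x hx)).congr (hψφ.mono (preimage_mono (hA x hx)))
  · exact (hΨ _ ⟨x, Nat.le_of_lt_succ hx, rfl⟩).congr (hψΨ x (Nat.le_of_lt_succ hx))

end Fintype

theorem IsConstrainedHomotopy.exists_extension [Finite ι]
    (hcomp : ∀ S : Set κ, S.Nonempty → ∀ n,
      Compressible (Fs ∩ ⋂ i ∈ S, G i) (⋂ i ∈ S, G i) (unitSphere (Fin n → ℝ)))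
    (hC : ∀ i, IsGridUnion (C i)) (hcover : ∀ x, ∃ i, x ∈ C i) (hfG : ∀ i, MapsTo f (C i) (G i))
    (hA : IsGridUnion A) (h : IsConstrainedHomotopy Fs G f C A φ) :
    ∃ ψ, IsConstrainedHomotopy Fs G f C univ ψ ∧ EqOn ψ φ (Prod.snd ⁻¹' A) := by
  cases nonempty_fintype ι
  have hskel : ∀ k, ∃ ψ, IsConstrainedHomotopy Fs G f C (A ∪ {x | gridDim x < k}) ψ ∧
      EqOn ψ φ (Prod.snd ⁻¹' A) := fun k => by
    induction k with
    | zero => exact ⟨φ, by simpa using h, fun _ _ => rfl⟩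
    | succ k ih =>
      obtain ⟨ψ, hψ, hψφ⟩ := ih
      obtain ⟨ψ', hψ', hψψ'⟩ := hψ.exists_extension_skeleton_succ hcomp hC hcover hfG
        (hA.union (isGridUnion_setOf_gridDim_lt k)) fun x hx => .inr hx
      rw [union_assoc] at hψ'
      exact ⟨ψ', hψ'.mono (union_subset_union_right _ subset_union_right),
        (hψψ'.mono (preimage_mono subset_union_left)).trans hψφ⟩
  obtain ⟨ψ, hψ, hψφ⟩ := hskel (Fintype.card ι + 1)
  exact ⟨ψ, hψ.mono fun x _ => .inr (Nat.lt_succ_of_le (Finset.card_le_univ _)), hψφ⟩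

end GridDeformation

section ConstraintCover

variable {D Z κ : Type*} [TopologicalSpace D]

/-- An open cover of `A` such that over its `i`-th member `f` maps `A` into `G i`. -/
structure IsConstraintCover (G : κ → Set Z) (f : D → Z) (A : Set D) (V : κ → Set D) : Prop where
  isOpen : ∀ i, IsOpen (V i)
  exists_mem : ∀ x ∈ A, ∃ i, x ∈ V i
  apply_mem : ∀ i, ∀ x ∈ V i, x ∈ A → f x ∈ G i

theorem IsConstraintCover.iUnion_fiber {κ' : Type*} {G : κ → Set Z} {f : D → Z} {A : Set D}
    {j : κ' → κ} {W : κ' → Set D} (hW : IsConstraintCover (fun p => G (j p)) f A W) :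
    IsConstraintCover G f A fun i => ⋃ p ∈ j ⁻¹' {i}, W p := by
  refine ⟨fun i => isOpen_biUnion fun p _ => hW.isOpen p, fun x hx => ?_, fun i x hx hxA => ?_⟩
  · obtain ⟨p, hp⟩ := hW.exists_mem x hx
    exact ⟨j p, mem_biUnion rfl hp⟩
  · obtain ⟨p, rfl, hp⟩ := mem_iUnion₂.1 hx
    exact hW.apply_mem p x hp hxA

end ConstraintCover

section CubeDeformation

variable {ι Z κ : Type*} [Fintype ι] [TopologicalSpace Z]

/-- The retraction of `ℝ^ι` onto the cube `[-N, N]^ι`, followed by rescaling to `[-1, 1]^ι`. -/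
noncomputable def cubeRetraction (ι : Type*) [Fintype ι] (N : ℕ) : C(ι → ℝ, UnitBall (ι → ℝ)) where
  toFun x := ⟨fun i => projIcc (-1) 1 (by norm_num) ((N : ℝ)⁻¹ * x i),
    mem_closedBall_zero_iff.2 ((pi_norm_le_iff_of_nonneg zero_le_one).2 fun i =>
      abs_le.2 (projIcc (-1 : ℝ) 1 (by norm_num) _).2)⟩
  continuous_toFun := by
    refine .subtype_mk (continuous_pi fun i => continuous_subtype_val.comp ?_) _
    exact continuous_projIcc.comp (continuous_const.mul (continuous_apply i))

theorem cubeRetraction_smul {N : ℕ} (hN : N ≠ 0) (x : UnitBall (ι → ℝ)) :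
    cubeRetraction ι N ((N : ℝ) • (x : ι → ℝ)) = x := by
  ext i
  have hx : (x : ι → ℝ) i ∈ Icc (-1 : ℝ) 1 :=
    abs_le.1 ((norm_le_pi_norm (x : ι → ℝ) i).trans x.norm_le)
  simp [cubeRetraction, hN, projIcc_of_mem _ hx]

theorem cubeRetraction_mem_unitSphere {N : ℕ} (hN : N ≠ 0) {x : ι → ℝ} (hx : ∃ i, N ≤ |x i|) :
    cubeRetraction ι N x ∈ unitSphere (ι → ℝ) := by
  obtain ⟨i, hi⟩ := hx
  have hN' : (0 : ℝ) < N := by positivity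
  refine mem_unitSphere_pi_iff.2 ⟨i, ?_⟩
  change |(projIcc (-1 : ℝ) 1 (by norm_num) ((N : ℝ)⁻¹ * x i) : ℝ)| = 1
  rcases le_abs.1 hi with h | h
  · rw [projIcc_of_right_le _ ((le_inv_mul_iff₀ hN').2 (by linarith)), abs_one]
  · rw [projIcc_of_le_left _ ((inv_mul_le_iff₀ hN').2 (by linarith)), abs_neg, abs_one]

theorem dist_cubeRetraction_le (N : ℕ) (x y : ι → ℝ) :
    dist (cubeRetraction ι N x) (cubeRetraction ι N y) ≤ (N : ℝ)⁻¹ * dist x y := by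
  refine (dist_pi_le_iff (by positivity)).2 fun i => ?_
  calc dist (projIcc (-1 : ℝ) 1 (by norm_num) ((N : ℝ)⁻¹ * x i) : ℝ)
        (projIcc (-1 : ℝ) 1 (by norm_num) ((N : ℝ)⁻¹ * y i))
      ≤ dist ((N : ℝ)⁻¹ * x i) ((N : ℝ)⁻¹ * y i) := by
        simpa [Subtype.dist_eq] using (LipschitzWith.projIcc (by norm_num)).dist_le_mul _ _
    _ = (N : ℝ)⁻¹ * dist (x i) (y i) := by
        rw [Real.dist_eq, ← mul_sub, abs_mul, abs_of_nonneg (by positivity), Real.dist_eq]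
    _ ≤ (N : ℝ)⁻¹ * dist x y := by gcongr; exact dist_le_pi_dist x y i

theorem exists_mapsTo_cubeRetraction_closedBall {V : κ → Set (UnitBall (ι → ℝ))}
    (hV : ∀ i, IsOpen (V i)) (hcover : ∀ x, ∃ i, x ∈ V i) :
    ∃ N ≠ 0, ∀ x : ι → ℝ, ∃ i, MapsTo (cubeRetraction ι N) (closedBall x 2) (V i) := by
  obtain ⟨δ, hδ, hball⟩ := lebesgue_number_lemma_of_metric isCompact_univ hV
    fun x _ => mem_iUnion.2 (hcover x)
  obtain ⟨N, hN⟩ := exists_nat_gt (2 / δ)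
  have hN0 : (0 : ℝ) < N := (by positivity : (0 : ℝ) < 2 / δ).trans hN
  refine ⟨N, mod_cast hN0.ne', fun x => (hball (cubeRetraction ι N x) (mem_univ _)).imp
    fun i hi y hy => hi ?_⟩
  calc dist (cubeRetraction ι N y) (cubeRetraction ι N x)
      ≤ (N : ℝ)⁻¹ * dist y x := dist_cubeRetraction_le N y x
    _ ≤ (N : ℝ)⁻¹ * 2 := by gcongr; exact hy
    _ < δ := by rwa [inv_mul_lt_iff₀ hN0, ← div_lt_iff₀ hδ]

variable {Fs : Set Z} {G : κ → Set Z} {f : C(UnitBall (ι → ℝ), Z)}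
  {V : κ → Set (UnitBall (ι → ℝ))}

/-- On a sufficiently fine grid, the deformation is carried out over one cell after the other. -/
theorem exists_homotopicRel_unitSphere_of_compressible
    (hcomp : ∀ S : Set κ, S.Nonempty → ∀ n,
      Compressible (Fs ∩ ⋂ i ∈ S, G i) (⋂ i ∈ S, G i) (unitSphere (Fin n → ℝ)))
    (hV : IsConstraintCover G f univ V) (hf : MapsTo f (unitSphere (ι → ℝ)) Fs) :
    ∃ (g : C(UnitBall (ι → ℝ), Z)) (W : κ → Set (UnitBall (ι → ℝ))),
      f.HomotopicRel g (unitSphere (ι → ℝ)) ∧ (∀ x, g x ∈ Fs) ∧ IsConstraintCover G g univ W := by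
  obtain ⟨N, hN, hball⟩ := exists_mapsTo_cubeRetraction_closedBall hV.isOpen fun x =>
    hV.exists_mem x (mem_univ x)
  set r := cubeRetraction ι N
  let C : κ → Set (ι → ℝ) := fun i => {x | gridCell x ⊆ r ⁻¹' V i}
  let A : Set (ι → ℝ) := {x | ∃ i, N ≤ |x i|}
  have hCr : ∀ i x, x ∈ C i → r x ∈ V i := fun i x hx => hx (mem_gridCell_self x)
  have hCball : ∀ x, ∃ i, ball x 1 ⊆ C i := fun x => (hball x).imp fun i hi y hy z hz => hi <| by
    have hzy : dist z y ≤ 1 :=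
      (dist_pi_le_iff zero_le_one).2 (abs_sub_le_one_of_mem_gridCell hz)
    have hyx : dist y x < 1 := hy
    exact mem_closedBall.2 ((dist_triangle z y x).trans (by linarith))
  obtain ⟨ψ, hψ, hψA⟩ := IsConstrainedHomotopy.exists_extension (f := f.comp r) (C := C) (A := A)
    (φ := fun p => f (r p.2)) hcomp (fun i => isGridUnion_setOf_gridCell_subset _)
    (fun x => (hCball x).imp fun i hi => hi (mem_ball_self one_pos))
    (fun i x hx => hV.apply_mem i _ (hCr i x hx) (mem_univ _)) (isGridUnion_setOf_exists_le_abs N)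
    ⟨by fun_prop, fun _ _ => rfl, fun x hx => hf (cubeRetraction_mem_unitSphere hN hx),
      fun _ x _ i hi => hV.apply_mem i _ (hCr i x hi) (mem_univ _)⟩
  let s : UnitBall (ι → ℝ) → ι → ℝ := fun x => (N : ℝ) • (x : ι → ℝ)
  have hs : Continuous s := by fun_prop
  have hrs : ∀ x, r (s x) = x := cubeRetraction_smul hN
  let H : C(I × UnitBall (ι → ℝ), Z) := ⟨fun p => ψ (p.1, s p.2),
    hψ.continuousOn.comp_continuous (by fun_prop) fun _ => mem_univ _⟩
  have hsA : ∀ x ∈ unitSphere (ι → ℝ), s x ∈ A := fun x hx => by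
    obtain ⟨i, hi⟩ := mem_unitSphere_pi_iff.1 hx
    exact ⟨i, by simp [s, abs_mul, hi]⟩
  refine ⟨H.comp (.prodMk (.const _ 1) (.id _)), fun i => s ⁻¹' interior (C i), ⟨{
      toContinuousMap := H
      map_zero_left := fun x => (hψ.apply_zero (s x) (mem_univ _)).trans (congrArg f (hrs x))
      map_one_left := fun _ => rfl
      prop' := fun t x hx => (hψA (x := (t, s x)) (hsA x hx)).trans (congrArg f (hrs x)) }⟩,
    fun x => hψ.apply_one_mem (s x) (mem_univ _),
    fun i => isOpen_interior.preimage hs,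
    fun x _ => (hCball (s x)).imp fun i hi =>
      mem_interior.2 ⟨_, hi, isOpen_ball, mem_ball_self one_pos⟩,
    fun i x hx _ => hψ.apply_mem 1 (s x) (mem_univ _) i (interior_subset hx)⟩

end CubeDeformation

section Lifting

variable {X : Type u} {Z : Type v} {D D' : Type*} [TopologicalSpace X] [TopologicalSpace Z]
  [TopologicalSpace D] [TopologicalSpace D'] {w : C(X, Z)} {S : Set D} {S' : Set D'}

theorem homotopicRel_comp_of_mapsTo {f g : C(D, Z)} (h : f.HomotopicRel g S) {k : C(D', D)}
    (hk : MapsTo k S' S) : (f.comp k).HomotopicRel (g.comp k) S' :=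
  h.map fun F => ⟨F.toHomotopy.comp (.refl k), fun t _ hx => F.prop t _ (hk hx)⟩

/-- The lifting property up to homotopy of `w : X → Z` against the pair `(D, S)`: every map
`D → Z` with a lift to `X` over `S` is homotopic relative to `S` to a map with a lift to `X` over
`D` that extends the given one. -/
def HasLifting (w : C(X, Z)) (S : Set D) : Prop :=
  ∀ (b : C(D, Z)) (a : C(S, X)), (∀ x, w (a x) = b x) →
    ∃ c : C(D, X), (∀ x : S, c x = a x) ∧ b.HomotopicRel (w.comp c) S

theorem HasLifting.of_homeomorph (h : HasLifting w S) (e : D ≃ₜ D')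
    (he : ∀ x, e x ∈ S' ↔ x ∈ S) : HasLifting w S' := by
  intro b a hab
  obtain ⟨c, hc, hbc⟩ := h (b.comp e) ⟨fun x => a ⟨e x, (he x).2 x.2⟩, by fun_prop⟩
    fun _ => hab _
  have he' : MapsTo e.symm S' S := fun y hy => by rwa [← he, e.apply_symm_apply]
  refine ⟨c.comp e.symm, fun x => ?_, ?_⟩
  · simpa using hc ⟨e.symm x, he' x.2⟩
  · have := homotopicRel_comp_of_mapsTo (k := (e.symm : C(D', D))) hbc he'
    rwa [ContinuousMap.comp_assoc, e.toContinuousMap_comp_symm, ContinuousMap.comp_id] at this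

theorem HasLifting.surjective_piMap {n : ℕ} (h : HasLifting w (Cube.boundary (Fin n))) (x : X) :
    Function.Surjective (piMap n w x) := by
  intro q
  induction q using Quotient.inductionOn with | h q
  obtain ⟨c, hc, hqc⟩ := h q.1 (.const _ x) fun y => (q.2 y y.2).symm
  exact ⟨Quotient.mk _ ⟨c, fun y hy => hc ⟨y, hy⟩⟩, (Quotient.sound hqc).symm⟩

/-- A homotopy in `Z` between the images of two loops of `X` is a map on a cube that is lifted to
`X` over the boundary. -/
theorem HasLifting.injective_piMap {n : ℕ}
    (h : HasLifting w {z : I × (Fin n → I) | (z.1 = 0 ∨ z.1 = 1) ∨ z.2 ∈ Cube.boundary (Fin n)})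
    (x : X) : Function.Injective (piMap n w x) := by
  intro p q hpq
  induction p using Quotient.inductionOn with | h p
  induction q using Quotient.inductionOn with | h q
  obtain ⟨K⟩ : GenLoop.Homotopic (genLoopMap w p) (genLoopMap w q) := Quotient.exact hpq
  let a : C({z : I × (Fin n → I) | (z.1 = 0 ∨ z.1 = 1) ∨ z.2 ∈ Cube.boundary (Fin n)}, X) :=
    ⟨fun z => if (z.1.1 : ℝ) ≤ 1 / 2 then p z.1.2 else q z.1.2,
      Continuous.if_le (by fun_prop) (by fun_prop) (by fun_prop) (by fun_prop) fun z hz => by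
        have hz' : z.1.2 ∈ Cube.boundary (Fin n) := by
          refine z.2.resolve_left ?_
          rintro (h | h) <;> norm_num [h] at hz
        rw [GenLoop.boundary p _ hz', GenLoop.boundary q _ hz']⟩
  have ha0 : ∀ y hy, a ⟨(0, y), hy⟩ = p y := fun y _ => if_pos (by norm_num)
  have ha1 : ∀ y hy, a ⟨(1, y), hy⟩ = q y := fun y _ => if_neg (by norm_num)
  have ha : ∀ t, ∀ y ∈ Cube.boundary (Fin n), ∀ hy, a ⟨(t, y), hy⟩ = p y := fun t y hy _ => by
    change ite _ (p y) (q y) = p y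
    rw [GenLoop.boundary p y hy, GenLoop.boundary q y hy, ite_self]
  obtain ⟨c, hc, -⟩ := h K a <| by
    rintro ⟨⟨t, y⟩, hz⟩
    have hty : (t = 0 ∨ t = 1) ∨ y ∈ Cube.boundary (Fin n) := hz
    obtain (rfl | rfl) | hy := hty
    · exact (congrArg w (ha0 y _)).trans (K.apply_zero y).symm
    · exact (congrArg w (ha1 y _)).trans (K.apply_one y).symm
    · exact (congrArg w (ha t y hy _)).trans (K.eq_fst t hy).symm
  refine Quotient.sound ⟨⟨⟨c, fun y => ?_, fun y => ?_⟩, fun t y hy => ?_⟩⟩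
  · exact (hc ⟨(0, y), .inl (.inl rfl)⟩).trans (ha0 y _)
  · exact (hc ⟨(1, y), .inl (.inr rfl)⟩).trans (ha1 y _)
  · exact (hc ⟨(t, y), .inr hy⟩).trans (ha t y hy _)

/-- The homeomorphism between `I × I^n` and `I^(n+1)`. -/
def cubeConsHomeomorph (n : ℕ) : I × (Fin n → I) ≃ₜ (Fin (n + 1) → I) where
  toEquiv := Fin.consEquiv fun _ => I
  continuous_toFun := Continuous.finCons (A := fun _ => I) continuous_fst continuous_snd
  continuous_invFun := by dsimp [Fin.consEquiv, Fin.tail]; fun_prop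

theorem cubeConsHomeomorph_mem_boundary_iff {n : ℕ} {z : I × (Fin n → I)} :
    cubeConsHomeomorph n z ∈ Cube.boundary (Fin (n + 1)) ↔
      (z.1 = 0 ∨ z.1 = 1) ∨ z.2 ∈ Cube.boundary (Fin n) :=
  Fin.exists_fin_succ (P := fun i => Fin.cons (α := fun _ => I) z.1 z.2 i = 0 ∨
    Fin.cons (α := fun _ => I) z.1 z.2 i = 1)

theorem HasLifting.bijective_pi0Map (h0 : HasLifting w (Cube.boundary (Fin 0)))
    (hinj : ∀ x, Function.Injective (piMap 0 w x)) : Function.Bijective (pi0Map w) := by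
  refine ⟨fun p q hpq => ?_, fun q => ?_⟩
  · induction p using Quotient.inductionOn with | h x
    have hx := hinj x
    rw [piMap_zero] at hx
    exact ((Equiv.injective_comp _ _).1 ((Equiv.comp_injective _ _).1 hx)) hpq
  · induction q using Quotient.inductionOn with | h z
    have : IsEmpty (Cube.boundary (Fin 0)) := ⟨fun y => y.2.elim fun i => i.elim0⟩
    obtain ⟨c, -, ⟨K⟩⟩ := h0 (.const _ z) ⟨isEmptyElim, continuous_of_discreteTopology⟩ isEmptyElim
    exact ⟨Quotient.mk _ (c 0), Quotient.sound ⟨(K.evalAt 0).symm⟩⟩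

theorem isWeakHomotopyEquiv_of_hasLifting (h : ∀ n, HasLifting w (unitSphere (Fin n → ℝ))) :
    IsWeakHomotopyEquiv w := by
  have hcube : ∀ n, HasLifting w (Cube.boundary (Fin n)) := fun n =>
    (h n).of_homeomorph (cubeHomeomorph _) fun _ => cubeHomeomorph_mem_boundary_iff
  have hinj : ∀ n x, Function.Injective (piMap n w x) := fun n =>
    ((hcube (n + 1)).of_homeomorph (cubeConsHomeomorph n).symm fun y => by
      rw [← (cubeConsHomeomorph n).apply_symm_apply y, cubeConsHomeomorph_mem_boundary_iff,
        Homeomorph.symm_apply_apply]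
      rfl).injective_piMap
  exact ⟨w.continuous, (hcube 0).bijective_pi0Map (hinj 0), fun n _ x =>
    ⟨hinj n x, (hcube n).surjective_piMap x⟩⟩

end Lifting

section Collar

namespace UnitBall

variable {V : Type*} [NormedAddCommGroup V]

theorem isOpen_setOf_norm_lt (r : ℝ) : IsOpen {x : UnitBall V | ‖(x : V)‖ < r} :=
  isOpen_lt (by fun_prop) (by fun_prop)

theorem isOpen_setOf_lt_norm (r : ℝ) : IsOpen {x : UnitBall V | r < ‖(x : V)‖} :=
  isOpen_lt (by fun_prop) (by fun_prop)

/-- A cutoff function which is `1` on the ball of radius `3 / 4` and `0` on the sphere. -/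
noncomputable def cutoff : C(UnitBall V, I) where
  toFun x := projIcc 0 1 zero_le_one (4 - 4 * ‖(x : V)‖)
  continuous_toFun := continuous_projIcc.comp (by fun_prop)

theorem cutoff_eq_one {x : UnitBall V} (hx : ‖(x : V)‖ ≤ 3 / 4) : cutoff x = 1 :=
  projIcc_of_right_le zero_le_one (by linarith)

theorem cutoff_eq_zero {x : UnitBall V} (hx : x ∈ unitSphere V) : cutoff x = 0 := by
  have hx1 : ‖(x : V)‖ = 1 := hx
  exact projIcc_of_le_left zero_le_one (by linarith)

variable [NormedSpace ℝ V]

theorem homotopicRel_stretch :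
    (ContinuousMap.id (UnitBall V)).HomotopicRel stretch (unitSphere V) :=
  ⟨{ toFun := fun p => segment (p.1, p.2, stretch p.2)
     continuous_toFun := by fun_prop
     map_zero_left := fun x => by ext1; simp [coe_segment]
     map_one_left := fun x => by ext1; simp [coe_segment]
     prop' := fun t x hx => by
      ext1
      simp [coe_segment, stretch_of_mem_unitSphere hx, ← add_smul] }⟩

theorem homotopicRel_comp_stretch {Z : Type*} [TopologicalSpace Z] (f : C(UnitBall V, Z)) :
    f.HomotopicRel (f.comp stretch) (unitSphere V) :=
  homotopicRel_stretch.comp_continuousMap f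

/-- The points of the collar `2⁻¹ < ‖x‖` of the sphere whose radial projection to the sphere lies
in `U`. -/
def collar (U : Set (UnitBall V)) : Set (UnitBall V) :=
  {x | 2⁻¹ < ‖(x : V)‖ ∧ stretch x ∈ U}

theorem isOpen_collar {U : Set (UnitBall V)} (hU : IsOpen U) : IsOpen (collar U) :=
  (isOpen_setOf_lt_norm _).inter (hU.preimage stretch.continuous)

theorem stretch_mem_unitSphere_of_mem_collar {U : Set (UnitBall V)} {x : UnitBall V}
    (hx : x ∈ collar U) : stretch x ∈ unitSphere V :=
  stretch_mem_unitSphere hx.1.le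

theorem mem_collar_iff {U : Set (UnitBall V)} {x : UnitBall V} (hx : x ∈ unitSphere V) :
    x ∈ collar U ↔ x ∈ U := by
  have hx1 : ‖(x : V)‖ = 1 := hx
  change _ ∧ _ ↔ _
  rw [stretch_of_mem_unitSphere hx, hx1]
  exact and_iff_right (by norm_num)

end UnitBall

end Collar

section Resolution

open UnitBall

variable {V : Type*} [NormedAddCommGroup V] [NormedSpace ℝ V]
  {Z κ : Type*} [TopologicalSpace Z] {Fs : Set Z} {G : κ → Set Z}

/-- A deformation into `G m` that preserves the constraints is carried out away from the sphere,
so that the constraint `m` holds there and the given ones hold on a collar of the sphere. -/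
theorem exists_homotopicRel_isConstraintCover {b : C(UnitBall V, Z)} {U : κ → Set (UnitBall V)}
    {m : κ} {H : C(I × UnitBall V, Z)} (hH0 : ∀ x, H (0, x) = b x) (hH1 : ∀ x, H (1, x) ∈ G m)
    (hH : ∀ t, IsConstraintCover G (fun x => H (t, x)) (unitSphere V) U) :
    ∃ (h : C(UnitBall V, Z)) (W : κ → Set (UnitBall V)),
      b.HomotopicRel h (unitSphere V) ∧ IsConstraintCover G h univ W := by
  have hdamped : (b.comp stretch).HomotopicRel
      ⟨fun x => H (cutoff x, stretch x), by fun_prop⟩ (unitSphere V) :=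
    ⟨{  toFun := fun p => H (p.1 * cutoff p.2, stretch p.2)
        continuous_toFun := by fun_prop
        map_zero_left := fun x => by simp [hH0]
        map_one_left := fun x => by simp
        prop' := fun t x hx => by simp [cutoff_eq_zero hx, hH0] }⟩
  refine ⟨_, fun i => {x | i = m ∧ ‖(x : V)‖ < 3 / 4} ∪ collar (U i),
    (homotopicRel_comp_stretch b).trans hdamped, fun i => ?_, fun x _ => ?_, fun i x hx _ => ?_⟩
  · exact (isOpen_const.inter (isOpen_setOf_norm_lt _)).union
      (isOpen_collar ((hH 0).isOpen i))
  · rcases lt_or_ge ‖(x : V)‖ (3 / 4) with hx | hx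
    · exact ⟨m, .inl ⟨rfl, hx⟩⟩
    · obtain ⟨i, hi⟩ := (hH 0).exists_mem _ (stretch_mem_unitSphere (x := x) (by linarith))
      exact ⟨i, .inr ⟨by linarith, hi⟩⟩
  · rcases hx with ⟨rfl, hx⟩ | hx
    · simpa [cutoff_eq_one hx.le] using hH1 _
    · exact (hH _).apply_mem i _ hx.2 (stretch_mem_unitSphere_of_mem_collar hx)

theorem exists_homotopicRel_isConstraintCover_collar {k : C(UnitBall V, Z)}
    {U W : κ → Set (UnitBall V)} (hW : IsConstraintCover G k univ W)
    (hU : IsConstraintCover G k (unitSphere V) U) :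
    ∃ U' : κ → Set (UnitBall V), IsConstraintCover G (k.comp stretch) univ U' ∧
      ∀ i, ∀ x ∈ unitSphere V, x ∈ U' i ↔ x ∈ U i := by
  refine ⟨fun i => {x | ‖(x : V)‖ < 1 ∧ stretch x ∈ W i} ∪ collar (U i),
    ⟨fun i => ?_, fun x _ => ?_, fun i x hx _ => ?_⟩, fun i x hx => ?_⟩
  · exact ((isOpen_setOf_norm_lt _).inter
      ((hW.isOpen i).preimage stretch.continuous)).union (isOpen_collar (hU.isOpen i))
  · rcases lt_or_ge ‖(x : V)‖ 1 with hx | hx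
    · obtain ⟨i, hi⟩ := hW.exists_mem (stretch x) (mem_univ _)
      exact ⟨i, .inl ⟨hx, hi⟩⟩
    · obtain ⟨i, hi⟩ := hU.exists_mem _ (stretch_mem_unitSphere (x := x) (by linarith))
      exact ⟨i, .inr ⟨by linarith, hi⟩⟩
  · rcases hx with ⟨_, hx⟩ | hx
    · exact hW.apply_mem i _ hx (mem_univ _)
    · exact hU.apply_mem i _ hx.2 (stretch_mem_unitSphere_of_mem_collar hx)
  · have hx1 : ‖(x : V)‖ = 1 := hx
    simp only [mem_union, mem_collar_iff hx, mem_ofPred_eq, hx1, lt_irrefl, false_and, false_or]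

variable {ι : Type*} [Fintype ι]

/-- Finitely many constraints suffice on the compact sphere; only these have to be kept by the
deformation. -/
theorem exists_homotopicRel_unitSphere_of_deformation
    (hcomp : ∀ S : Set κ, S.Finite → S.Nonempty → ∀ n,
      Compressible (Fs ∩ ⋂ i ∈ S, G i) (⋂ i ∈ S, G i) (unitSphere (Fin n → ℝ)))
    {b : C(UnitBall (ι → ℝ), Z)}
    (hdef : ∀ T : Set κ, T.Finite → ∃ (m : κ) (H : C(I × UnitBall (ι → ℝ), Z)),
      (∀ x, H (0, x) = b x) ∧ (∀ x, H (1, x) ∈ G m) ∧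
      ∀ i ∈ T, ∀ x t, b x ∈ G i → H (t, x) ∈ G i)
    {U : κ → Set (UnitBall (ι → ℝ))} (hU : IsConstraintCover G b (unitSphere (ι → ℝ)) U)
    (hb : MapsTo b (unitSphere (ι → ℝ)) Fs) :
    ∃ (k : C(UnitBall (ι → ℝ), Z)) (W : κ → Set (UnitBall (ι → ℝ))),
      b.HomotopicRel k (unitSphere (ι → ℝ)) ∧ (∀ x, k x ∈ Fs) ∧ IsConstraintCover G k univ W := by
  have hcompact : IsCompact (unitSphere (ι → ℝ)) :=
    (isClosed_eq (by fun_prop) (by fun_prop)).isCompact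
  obtain ⟨T, hT⟩ := hcompact.elim_finite_subcover U hU.isOpen fun x hx =>
    mem_iUnion.2 (hU.exists_mem x hx)
  obtain ⟨m, H, hH0, hH1, hHG⟩ := hdef T T.finite_toSet
  let j : Option T → κ := fun p => p.elim m (↑)
  let U' : Option T → Set (UnitBall (ι → ℝ)) := fun p => p.elim ∅ fun i => U i
  have hU' : ∀ t, IsConstraintCover (fun p => G (j p)) (fun x => H (t, x)) (unitSphere _) U' := by
    refine fun t => ⟨?_, fun x hx => ?_, ?_⟩
    · rintro (_ | i)
      exacts [isOpen_empty, hU.isOpen i]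
    · obtain ⟨i, hi, hxi⟩ := mem_iUnion₂.1 (hT hx)
      exact ⟨some ⟨i, hi⟩, hxi⟩
    · rintro (_ | i) x hxi hx
      exacts [hxi.elim, hHG i i.2 x t (hU.apply_mem i x hxi hx)]
  obtain ⟨h, W, hbh, hW⟩ := exists_homotopicRel_isConstraintCover (m := none) hH0 hH1 hU'
  obtain ⟨k, W', hhk, hk, hW'⟩ := exists_homotopicRel_unitSphere_of_compressible
    (fun S hS n => by
      have := hcomp (j '' S) (S.toFinite.image j) (hS.image j) n
      rwa [biInter_image] at this)
    hW fun x hx => hbh.fst_eq_snd hx ▸ hb hx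
  exact ⟨k, _, hbh.trans hhk, hk, hW'.iUnion_fiber⟩

variable (Fs G) in
/-- The resolution of `Fs` by the subspaces `Fs ∩ G i`: a point of `Fs` together with a nonempty
set of indices `i` whose constraint `G i` it satisfies. Sets of indices carry the product of
Sierpiński topologies, so that a map to the resolution is a map to `Fs` together with an open cover
of the source over whose `i`-th member the values lie in `G i`. -/
abbrev Resolution : Type _ :=
  {p : Fs × (κ → Prop) // (∃ i, p.2 i) ∧ ∀ i, p.2 i → (p.1 : Z) ∈ G i}

variable (Fs G) in
/-- The projection of the resolution of `Fs` to the ambient space. -/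
def resolutionMap : C(Resolution Fs G, Z) :=
  ⟨fun p => p.1.1, by fun_prop⟩

/-- A map to the resolution, given by a map to `Fs` and a subordinate open cover. -/
def IsConstraintCover.toResolution {D : Type*} [TopologicalSpace D] {f : C(D, Z)} {W : κ → Set D}
    (hW : IsConstraintCover G f univ W) (hf : ∀ x, f x ∈ Fs) : C(D, Resolution Fs G) where
  toFun x := ⟨(⟨f x, hf x⟩, fun i => x ∈ W i), hW.exists_mem x (mem_univ x),
    fun i hi => hW.apply_mem i x hi (mem_univ x)⟩
  continuous_toFun := .subtype_mk (.prodMk (by fun_prop)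
    (continuous_pi fun i => continuous_Prop.2 (hW.isOpen i))) _

theorem exists_isConstraintCover_of_resolution {D : Type*} [TopologicalSpace D] {A : Set D}
    {b : C(D, Z)} {a : C(A, Resolution Fs G)} (hab : ∀ x, resolutionMap Fs G (a x) = b x) :
    MapsTo b A Fs ∧
      ∃ U : κ → Set D, IsConstraintCover G b A U ∧ ∀ i x, (a x).1.2 i ↔ (x : D) ∈ U i := by
  have hopen : ∀ i, IsOpen {x | (a x).1.2 i} := fun i =>
    continuous_Prop.1 (by fun_prop)
  choose U hU hUa using fun i => isOpen_induced_iff.1 (hopen i)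
  have hmem : ∀ i x, (a x).1.2 i ↔ (x : D) ∈ U i := fun i x => (Set.ext_iff.1 (hUa i) x).symm
  refine ⟨fun x hx => hab ⟨x, hx⟩ ▸ (a ⟨x, hx⟩).1.1.2, U, ⟨hU, fun x hx => ?_, fun i x hi hx => ?_⟩,
    hmem⟩
  · exact (a ⟨x, hx⟩).2.1.imp fun i hi => (hmem i ⟨x, hx⟩).1 hi
  · exact hab ⟨x, hx⟩ ▸ (a ⟨x, hx⟩).2.2 i ((hmem i ⟨x, hx⟩).2 hi)

theorem hasLifting_resolutionMap
    (hcomp : ∀ S : Set κ, S.Finite → S.Nonempty → ∀ n,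
      Compressible (Fs ∩ ⋂ i ∈ S, G i) (⋂ i ∈ S, G i) (unitSphere (Fin n → ℝ)))
    (hdef : ∀ (b : C(UnitBall (ι → ℝ), Z)) (T : Set κ), T.Finite →
      ∃ (m : κ) (H : C(I × UnitBall (ι → ℝ), Z)), (∀ x, H (0, x) = b x) ∧ (∀ x, H (1, x) ∈ G m) ∧
        ∀ i ∈ T, ∀ x t, b x ∈ G i → H (t, x) ∈ G i) :
    HasLifting (resolutionMap Fs G) (unitSphere (ι → ℝ)) := by
  intro b a hab
  obtain ⟨hb, U, hU, hUa⟩ := exists_isConstraintCover_of_resolution hab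
  obtain ⟨k, W, hbk, hk, hW⟩ := exists_homotopicRel_unitSphere_of_deformation hcomp (hdef b) hU hb
  have hUk : IsConstraintCover G k (unitSphere (ι → ℝ)) U :=
    ⟨hU.isOpen, hU.exists_mem, fun i x hi hx => hbk.fst_eq_snd hx ▸ hU.apply_mem i x hi hx⟩
  obtain ⟨U', hU', hUU'⟩ := exists_homotopicRel_isConstraintCover_collar hW hUk
  refine ⟨hU'.toResolution fun _ => hk _, fun x => ?_, hbk.trans (homotopicRel_comp_stretch k)⟩
  refine Subtype.ext (Prod.ext (Subtype.ext ?_) (funext fun i => propext ?_))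
  · change k (stretch x) = resolutionMap Fs G (a x)
    rw [hab, hbk.fst_eq_snd x.2, stretch_of_mem_unitSphere x.2]
  · exact (hUU' i x x.2).trans (hUa i x).symm

end Resolution

section BoxInduction

variable {ι : Type*} [Finite ι] [DecidableEq ι]

theorem box_induction {p : (ι → ℤ) → (ι → ℤ) → Prop} (base : ∀ a b, (∀ i, b i ≤ a i + 1) → p a b)
    (split : ∀ a b i m, a i ≤ m → m ≤ b i → p a (Function.update b i m) →
      p (Function.update a i m) b → p a b) (a b : ι → ℤ) : p a b := by
  cases nonempty_fintype ι
  induction hk : ∑ i, (b i - a i).toNat using Nat.strong_induction_on generalizing a b with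
  | h k ih =>
    subst hk
    by_cases hb : ∀ i, b i ≤ a i + 1
    · exact base a b hb
    obtain ⟨i, hi⟩ := not_forall.1 hb
    refine split a b i (a i + 1) (by lia) (by lia) (ih _ ?_ _ _ rfl) (ih _ ?_ _ _ rfl)
    · refine Finset.sum_lt_sum (fun j _ => ?_) ⟨i, Finset.mem_univ i, ?_⟩
      · rcases eq_or_ne j i with rfl | hj
        · simp only [Function.update_self]; lia
        · rw [Function.update_of_ne hj]
      · simp only [Function.update_self]; lia
    · refine Finset.sum_lt_sum (fun j _ => ?_) ⟨i, Finset.mem_univ i, ?_⟩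
      · rcases eq_or_ne j i with rfl | hj
        · simp only [Function.update_self]; lia
        · rw [Function.update_of_ne hj]
      · simp only [Function.update_self]; lia

end BoxInduction

section PullbackTrivialization

/-- A trivialization of the pullback of `π : E → M` along `q : B → M`: mutually inverse continuous
maps over `B` between `B × F` and the space of all `(z, e)` with `π e = q z`. -/
structure PullbackTrivialization (F : Type*) {E M B : Type*} [TopologicalSpace F]
    [TopologicalSpace E] [TopologicalSpace B] (π : E → M) (q : B → M) where
  map : C(B × F, E)
  proj_map : ∀ z f, π (map (z, f)) = q z
  coord : C({p : B × E // π p.2 = q p.1}, F)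
  coord_map : ∀ z f, coord ⟨(z, map (z, f)), proj_map z f⟩ = f
  map_coord : ∀ p, map (p.1.1, coord p) = p.1.2

namespace PullbackTrivialization

variable {E M F B B' : Type*} [TopologicalSpace E] [TopologicalSpace F] [TopologicalSpace B]
  [TopologicalSpace B'] {π : E → M} {q : B → M}

/-- The pullback of a trivialization along a map of bases. -/
def comp (e : PullbackTrivialization F π q) (g : C(B', B)) :
    PullbackTrivialization F π (q ∘ g) where
  map := ⟨fun p => e.map (g p.1, p.2), by fun_prop⟩
  proj_map z := e.proj_map (g z)
  coord := ⟨fun p => e.coord ⟨(g p.1.1, p.1.2), p.2⟩, by fun_prop⟩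
  coord_map z := e.coord_map (g z)
  map_coord p := e.map_coord ⟨(g p.1.1, p.1.2), p.2⟩

/-- The transition function between two trivializations. -/
def transition (e e' : PullbackTrivialization F π q) : C(B × F, F) :=
  ⟨fun p => e'.coord ⟨(p.1, e.map p), e.proj_map p.1 p.2⟩, by fun_prop⟩

theorem map_transition (e e' : PullbackTrivialization F π q) (z : B) (f : F) :
    e'.map (z, e.transition e' (z, f)) = e.map (z, f) :=
  e'.map_coord ⟨(z, e.map (z, f)), e.proj_map z f⟩

theorem transition_transition (e e' : PullbackTrivialization F π q) (z : B) (f : F) :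
    e'.transition e (z, e.transition e' (z, f)) = f := by
  refine Eq.trans (congrArg e.coord (Subtype.ext ?_)) (e.coord_map z f)
  exact Prod.ext rfl (e.map_transition e' z f)

/-- Changes a trivialization by a family of homeomorphisms of the fiber. -/
def twist (e : PullbackTrivialization F π q) (φ ψ : C(B × F, F))
    (hψφ : ∀ z f, ψ (z, φ (z, f)) = f) (hφψ : ∀ z f, φ (z, ψ (z, f)) = f) :
    PullbackTrivialization F π q where
  map := ⟨fun p => e.map (p.1, φ p), by fun_prop⟩
  proj_map z f := e.proj_map z _
  coord := ⟨fun p => ψ (p.1.1, e.coord p), by fun_prop⟩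
  coord_map z f := (congrArg (fun x => ψ (z, x)) (e.coord_map z _)).trans (hψφ z f)
  map_coord p := (congrArg (fun x => e.map (p.1.1, x)) (hφψ p.1.1 _)).trans (e.map_coord p)

variable {L R : Set B}

/-- Trivializations over two sets can be made to agree on their intersection if one of the sets
retracts to it: extend the transition function along the retraction. -/
theorem exists_map_eq_map (eL : PullbackTrivialization F π fun z : L => q z)
    (eR : PullbackTrivialization F π fun z : R => q z) (r : C(R, R)) (hrL : ∀ z, (r z : B) ∈ L)
    (hr : ∀ z : R, (z : B) ∈ L → r z = z) :
    ∃ e : PullbackTrivialization F π fun z : R => q z,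
      ∀ z (hzL : z ∈ L) (hzR : z ∈ R) f, e.map (⟨z, hzR⟩, f) = eL.map (⟨z, hzL⟩, f) := by
  let eL' := eL.comp ⟨fun z => (⟨r z, hrL z⟩ : L), by fun_prop⟩
  let eR' : PullbackTrivialization F π fun z => q (r z) := eR.comp r
  refine ⟨eR.twist (transition eL' eR') (transition eR' eL') (transition_transition eL' eR')
    (transition_transition eR' eL'), fun z hzL hzR f => ?_⟩
  have h := map_transition eL' eR' ⟨z, hzR⟩ f
  have hz := hr ⟨z, hzR⟩ hzL
  change eR.map (r ⟨z, hzR⟩, _) = eL.map (⟨r ⟨z, hzR⟩, _⟩, f) at h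
  change eR.map (⟨z, hzR⟩, _) = _
  simp only [hz] at h
  exact h

theorem coord_eq_coord (e e' : PullbackTrivialization F π q) {z : B} {x : E} (hx : π x = q z)
    (h : ∀ f, e.map (z, f) = e'.map (z, f)) : e.coord ⟨(z, x), hx⟩ = e'.coord ⟨(z, x), hx⟩ := by
  refine (e'.coord_map z _).symm.trans (congrArg e'.coord (Subtype.ext (Prod.ext rfl ?_)))
  exact (h _).symm.trans (e.map_coord ⟨(z, x), hx⟩)

theorem nonempty_of_map_eq_map (hL : IsClosed L) (hR : IsClosed R) (hLR : ∀ z, z ∈ L ∨ z ∈ R)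
    (eL : PullbackTrivialization F π fun z : L => q z)
    (eR : PullbackTrivialization F π fun z : R => q z)
    (h : ∀ z (hzL : z ∈ L) (hzR : z ∈ R) f, eR.map (⟨z, hzR⟩, f) = eL.map (⟨z, hzL⟩, f)) :
    Nonempty (PullbackTrivialization F π q) := by
  have hcoord : ∀ z (hzL : z ∈ L) (hzR : z ∈ R) x (hx : π x = q z),
      eL.coord ⟨(⟨z, hzL⟩, x), hx⟩ = eR.coord ⟨(⟨z, hzR⟩, x), hx⟩ := fun z hzL hzR x hx =>
    coord_eq_coord (eL.comp (B' := Unit) ⟨fun _ => ⟨z, hzL⟩, by fun_prop⟩)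
      (eR.comp ⟨fun _ => ⟨z, hzR⟩, by fun_prop⟩) (z := ()) hx fun f => (h z hzL hzR f).symm
  obtain ⟨T, hTL, hTR⟩ := exists_continuousMap_of_isClosed_cover
    (hL.preimage (continuous_fst (Y := F))) (hR.preimage continuous_fst) (fun p => hLR p.1)
    ⟨fun p => eL.map (⟨p.1.1, p.2⟩, p.1.2), by fun_prop⟩
    ⟨fun p => eR.map (⟨p.1.1, p.2⟩, p.1.2), by fun_prop⟩ fun p hp hp' => (h p.1 hp hp' p.2).symm
  obtain ⟨S, hSL, hSR⟩ := exists_continuousMap_of_isClosed_cover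
    (X := {p : B × E // π p.2 = q p.1})
    (hL.preimage (continuous_fst.comp continuous_subtype_val))
    (hR.preimage (continuous_fst.comp continuous_subtype_val)) (fun p => hLR p.1.1)
    ⟨fun p => eL.coord ⟨(⟨p.1.1.1, p.2⟩, p.1.1.2), p.1.2⟩, by fun_prop⟩
    ⟨fun p => eR.coord ⟨(⟨p.1.1.1, p.2⟩, p.1.1.2), p.1.2⟩, by fun_prop⟩
    fun p hp hp' => hcoord p.1.1 hp hp' p.1.2 p.2
  suffices key : ∀ z, ∃ (s : Set B) (e : PullbackTrivialization F π fun z : s => q z) (hz : z ∈ s),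
      (∀ f, T (z, f) = e.map (⟨z, hz⟩, f)) ∧
        ∀ x (hx : π x = q z), S ⟨(z, x), hx⟩ = e.coord ⟨(⟨z, hz⟩, x), hx⟩ by
    have hT : ∀ z f, π (T (z, f)) = q z := fun z f => by
      obtain ⟨s, e, hz, hT, -⟩ := key z
      exact hT f ▸ e.proj_map ⟨z, hz⟩ f
    refine ⟨T, hT, S, fun z f => ?_, fun p => ?_⟩
    · obtain ⟨s, e, hz, hTe, hS⟩ := key z
      refine (hS _ (hT z f)).trans (Eq.trans (congrArg e.coord ?_) (e.coord_map ⟨z, hz⟩ f))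
      exact Subtype.ext (Prod.ext rfl (hTe f))
    · obtain ⟨s, e, hz, hT, hS⟩ := key p.1.1
      rw [hT, hS _ p.2]
      exact e.map_coord ⟨(⟨p.1.1, hz⟩, p.1.2), p.2⟩
  rintro z
  obtain hz | hz := hLR z
  · exact ⟨L, eL, hz, fun f => hTL ⟨(z, f), hz⟩, fun x hx => hSL ⟨⟨(z, x), hx⟩, hz⟩⟩
  · exact ⟨R, eR, hz, fun f => hTR ⟨(z, f), hz⟩, fun x hx => hSR ⟨⟨(z, x), hx⟩, hz⟩⟩

/-- The trivialization given by a chart of the bundle whose domain contains the image of `q`. -/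
def ofChart {M : Type*} [TopologicalSpace M] {π : E → M} {q : C(B, M)} {U : Set M}
    (e : (π ⁻¹' U) ≃ₜ (U × F)) (he : ∀ y : π ⁻¹' U, ((e y).1 : M) = π y) (hq : ∀ z, q z ∈ U) :
    PullbackTrivialization F π q where
  map := ⟨fun p => e.symm (⟨q p.1, hq p.1⟩, p.2), by fun_prop⟩
  proj_map z f := by rw [ContinuousMap.coe_mk, ← he, e.apply_symm_apply]
  coord := ⟨fun p => (e ⟨p.1.2, show π p.1.2 ∈ U from p.2 ▸ hq p.1.1⟩).2, by fun_prop⟩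
  coord_map z f := congrArg Prod.snd (e.apply_symm_apply (⟨q z, hq z⟩, f))
  map_coord p := by
    have hp : π p.1.2 ∈ U := p.2 ▸ hq p.1.1
    have h : (⟨q p.1.1, hq p.1.1⟩, (e ⟨p.1.2, hp⟩).2) = e ⟨p.1.2, hp⟩ :=
      Prod.ext (Subtype.ext (p.2.symm.trans (he ⟨p.1.2, hp⟩).symm)) rfl
    exact congrArg Subtype.val ((e.symm_apply_eq).2 h)

end PullbackTrivialization

variable {E M F : Type*} [TopologicalSpace E] [TopologicalSpace F] {π : E → M} {ι : Type*}

theorem PullbackTrivialization.nonempty_Icc [DecidableEq ι] {q : (ι → ℝ) → M} {a b : ι → ℝ} {i : ι}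
    {m : ℝ} (ham : a i ≤ m) (hmb : m ≤ b i)
    (hL : Nonempty (PullbackTrivialization F π fun z : Icc a (Function.update b i m) => q z))
    (hR : Nonempty (PullbackTrivialization F π fun z : Icc (Function.update a i m) b => q z)) :
    Nonempty (PullbackTrivialization F π fun z : Icc a b => q z) := by
  obtain ⟨eL⟩ := hL
  obtain ⟨eR⟩ := hR
  let L : Set (Icc a b) := {z | (z : ι → ℝ) i ≤ m}
  let R : Set (Icc a b) := {z | m ≤ (z : ι → ℝ) i}
  let eL' : PullbackTrivialization F π fun z : L => q z := eL.comp
    ⟨fun z : L => ⟨z, z.1.2.1, le_update_iff.2 ⟨z.2, fun j _ => z.1.2.2 j⟩⟩, by fun_prop⟩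
  let eR' : PullbackTrivialization F π fun z : R => q z := eR.comp
    ⟨fun z : R => ⟨z, update_le_iff.2 ⟨z.2, fun j _ => z.1.2.1 j⟩, z.1.2.2⟩, by fun_prop⟩
  let r' : C(R, Icc a b) := ⟨fun z => ⟨Function.update z i m,
    le_update_iff.2 ⟨ham, fun j _ => z.1.2.1 j⟩, update_le_iff.2 ⟨hmb, fun j _ => z.1.2.2 j⟩⟩,
    by fun_prop⟩
  have hr' : ∀ z, (r' z : ι → ℝ) i = m := fun z => Function.update_self i m (z : ι → ℝ)
  let r : C(R, R) := ⟨fun z => ⟨r' z, (hr' z).ge⟩, by fun_prop⟩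
  obtain ⟨e, he⟩ := exists_map_eq_map (q := fun z : Icc a b => q z) eL' eR' r
    (fun z => (hr' z).le) fun z hz =>
      Subtype.ext (Subtype.ext (Function.update_eq_self_iff.2 (le_antisymm z.2 hz)))
  have hi : Continuous fun z : Icc a b => (z : ι → ℝ) i :=
    (continuous_apply i).comp continuous_subtype_val
  exact nonempty_of_map_eq_map (isClosed_le hi continuous_const) (isClosed_le continuous_const hi)
    (fun z => le_total (z.1 i) m) eL' e he

theorem PullbackTrivialization.nonempty_Icc_intCast [Fintype ι] {q : (ι → ℝ) → M}
    (hq : ∀ x : ι → ℝ, Nonempty (PullbackTrivialization F π fun z : closedBall x 1 => q z))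
    (a b : ι → ℤ) : Nonempty (PullbackTrivialization F π fun z :
      Icc (fun i => (a i : ℝ)) (fun i => (b i : ℝ)) => q z) := by
  classical
  induction a, b using box_induction with
  | base a b hab =>
    obtain ⟨e⟩ := hq fun i => a i
    refine ⟨e.comp ⟨inclusion fun z hz => (dist_pi_le_iff zero_le_one).2 fun i => ?_, by fun_prop⟩⟩
    have hi : (b i : ℝ) ≤ a i + 1 := mod_cast hab i
    exact abs_le.2 ⟨by linarith [hz.1 i], by linarith [hz.2 i]⟩
  | split a b i m ham hmb hL hR =>
    have hupdate (c : ι → ℤ) : (fun j => (Function.update c i m j : ℝ)) =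
        Function.update (fun j => (c j : ℝ)) i m := Function.comp_update Int.cast c i m
    rw [hupdate] at hL hR
    exact nonempty_Icc (mod_cast ham) (mod_cast hmb) hL hR

end PullbackTrivialization

section Bundle

theorem nonempty_homeomorph_unitBall {V V' : Type*} [NormedAddCommGroup V] [NormedSpace ℝ V]
    [NormedAddCommGroup V'] [NormedSpace ℝ V'] (L : V ≃L[ℝ] V') :
    Nonempty (UnitBall V ≃ₜ UnitBall V') := by
  have hinterior : (interior (L '' closedBall (0 : V) 1)).Nonempty := by
    rw [← L.coe_toHomeomorph, ← L.toHomeomorph.image_interior]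
    exact ((nonempty_ball.2 one_pos).mono ball_subset_interior_closedBall).image _
  obtain ⟨h, -, hh, -⟩ := exists_homeomorph_image_interior_closure_frontier_eq_unitBall
    ((convex_closedBall _ _).linear_image L.toLinearMap) hinterior
    (L.lipschitz.isBounded_image isBounded_closedBall)
  have hclosed : IsClosed (L.toLinearMap '' closedBall 0 1) :=
    L.toHomeomorph.isClosedMap _ isClosed_closedBall
  rw [hclosed.closure_eq] at hh
  exact ⟨(L.toHomeomorph.image _).trans ((h.image _).trans (.setCongr hh))⟩

variable {E M F : Type u} [TopologicalSpace E] [TopologicalSpace M] [TopologicalSpace F] {π : E → M}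
  {ι : Type*} [Fintype ι]

theorem IsFiberBundle.nonempty_pullbackTrivialization_unitBall (hπ : IsFiberBundle F π)
    (q : C(UnitBall (ι → ℝ), M)) : Nonempty (PullbackTrivialization F π q) := by
  choose U hU hxU e he using hπ.locTriv
  obtain ⟨N, hN, hball⟩ := exists_mapsTo_cubeRetraction_closedBall
    (fun x => (hU x).preimage q.continuous) (fun x => ⟨q x, hxU (q x)⟩)
  let q' : C(ι → ℝ, M) := q.comp (cubeRetraction ι N)
  obtain ⟨e'⟩ := PullbackTrivialization.nonempty_Icc_intCast (q := q') (fun x => by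
    obtain ⟨y, hy⟩ := hball x
    exact ⟨.ofChart (q := q'.restrict _) (e y) (he y) fun z =>
      hy (closedBall_subset_closedBall one_le_two z.2)⟩) (fun _ => -N) fun _ => N
  let s : C(UnitBall (ι → ℝ), Icc (fun _ : ι => (((-N : ℤ) : ℝ))) fun _ => ((N : ℤ) : ℝ)) := {
    toFun x := ⟨(N : ℝ) • (x : ι → ℝ), forall_and.1 fun i => by
      have hx : (x : ι → ℝ) i ∈ Icc (-1 : ℝ) 1 :=
        abs_le.1 ((norm_le_pi_norm (x : ι → ℝ) i).trans x.norm_le)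
      simp only [Pi.smul_apply, smul_eq_mul]
      push_cast
      constructor <;> nlinarith [N.cast_nonneg (α := ℝ), hx.1, hx.2]⟩ }
  have hs : q' ∘ (↑) ∘ s = q := funext fun x => congrArg q (cubeRetraction_smul hN x)
  exact ⟨hs ▸ e'.comp s⟩

theorem IsFiberBundle.nonempty_pullbackTrivialization_of_homeomorph_closedDisk
    (hπ : IsFiberBundle F π) {d : ℕ} {D : Set M} (h : D ≃ₜ closedDisk d) :
    Nonempty (PullbackTrivialization F π ((↑) : D → M)) := by
  obtain ⟨h'⟩ := nonempty_homeomorph_unitBall (EuclideanSpace.equiv (Fin d) ℝ)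
  let k : D ≃ₜ UnitBall (Fin d → ℝ) := h.trans h'
  obtain ⟨e⟩ := hπ.nonempty_pullbackTrivialization_unitBall
    ⟨fun x => (k.symm x : M), continuous_subtype_val.comp k.symm.continuous⟩
  have e' := e.comp (k : C(D, UnitBall (Fin d → ℝ)))
  have hk : (fun x => (k.symm x : M)) ∘ k = (↑) := funext fun x => congrArg _ (k.symm_apply_apply x)
  exact ⟨hk ▸ e'⟩

end Bundle

section Germ

variable {P Y : Type*} [TopologicalSpace P] [TopologicalSpace Y]

theorem homotopic_of_contractible [ContractibleSpace P] [PathConnectedSpace Y] (f g : C(P, Y)) :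
    f.Homotopic g := by
  obtain ⟨y, hy⟩ := id_nullhomotopic P
  have hconst (f : C(P, Y)) : f.Homotopic (.const P (f y)) :=
    (ContinuousMap.Homotopic.refl f).comp hy
  have : Nonempty P := ⟨y⟩
  exact (hconst f).trans ((ContinuousMap.homotopic_const_iff.2
    (PathConnectedSpace.joined (f y) (g y))).trans (hconst g).symm)

variable {B : Type u} [TopologicalSpace B] {A : Set B}

theorem ClosedCofibration.exists_retraction (hA : ClosedCofibration A) :
    ∃ ρ : C(B × I, {p : B × I // p.2 = 0 ∨ p.1 ∈ A}),
      (∀ x, (ρ (x, 0)).1 = (x, 0)) ∧ ∀ a ∈ A, ∀ t, (ρ (a, t)).1 = (a, t) := by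
  obtain ⟨H, h0, h1⟩ := hA.2 {p : B × I // p.2 = 0 ∨ p.1 ∈ A}
    ⟨fun x => ⟨(x, 0), Or.inl rfl⟩, by fun_prop⟩
    ⟨fun p => ⟨(p.1.1, p.2), Or.inr p.1.2⟩, by fun_prop⟩ (fun a => rfl)
  exact ⟨H, fun x => by rw [h0]; rfl, fun a ha t => by rw [h1 ⟨a, ha⟩ t]; rfl⟩

theorem ClosedCofibration.exists_homotopy_extension (hA : ClosedCofibration A) (β : C(P × B, Y))
    (Θ : C(I × (P × A), Y)) (hΘ : ∀ p (a : A), Θ (0, (p, a)) = β (p, a)) :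
    ∃ Φ : C(I × (P × B), Y), (∀ x, Φ (0, x) = β x) ∧
      ∀ t p (a : A), Φ (t, (p, a)) = Θ (t, (p, a)) := by
  obtain ⟨ρ, hρ0, hρA⟩ := hA.exists_retraction
  obtain ⟨ψ, hψ0, hψA⟩ := exists_continuousMap_of_isClosed_cover
    (X := P × {p : B × I // p.2 = 0 ∨ p.1 ∈ A}) (s := {x | x.2.1.2 = 0}) (t := {x | x.2.1.1 ∈ A})
    (isClosed_eq (by fun_prop) (by fun_prop)) (hA.1.preimage (by fun_prop)) (fun x => x.2.2)
    ⟨fun x => β (x.1.1, x.1.2.1.1), by fun_prop⟩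
    ⟨fun x => Θ (x.1.2.1.2, (x.1.1, ⟨x.1.2.1.1, x.2⟩)), by fun_prop⟩
    fun x h0 hxA => Eq.trans (hΘ x.1 ⟨_, hxA⟩).symm (by simp only [h0.symm]; rfl)
  refine ⟨⟨fun x => ψ (x.2.1, ρ (x.2.2, x.1)), by fun_prop⟩, fun x => ?_, fun t p a => ?_⟩
  · exact (hψ0 ⟨(x.1, ρ (x.2, 0)), congrArg Prod.snd (hρ0 x.2)⟩).trans
      (congrArg (fun z => β (x.1, z.1)) (hρ0 x.2))
  · have h : ρ (a, t) = ⟨(a, t), Or.inr a.2⟩ := Subtype.ext (hρA a a.2 t)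
    exact (congrArg (fun z => ψ (p, z)) h).trans (hψA ⟨(p, ⟨(a, t), Or.inr a.2⟩), a.2⟩)

variable {E M F : Type*} [TopologicalSpace E] [TopologicalSpace F] {π : E → M} {q : B → M}

theorem PullbackTrivialization.exists_homotopy [ContractibleSpace P] [PathConnectedSpace F]
    (e : PullbackTrivialization F π q) (hA : ClosedCofibration A) [ContractibleSpace A]
    (c : C(P × B, E)) (hc : ∀ x, π (c x) = q x.2) (γ : C(A, E)) (hγ : ∀ a, π (γ a) = q a) :
    ∃ Ψ : C(I × (P × B), E), (∀ x, π (Ψ x) = q x.2.2) ∧ (∀ x, Ψ (0, x) = c x) ∧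
      ∀ p (a : A), Ψ (1, (p, a)) = γ a := by
  let β : C(P × B, F) := ⟨fun x => e.coord ⟨(x.2, c x), hc x⟩, by fun_prop⟩
  let γ' : C(P × A, F) := ⟨fun x => e.coord ⟨(x.2, γ x.2), hγ x.2⟩, by fun_prop⟩
  obtain ⟨Θ⟩ := homotopic_of_contractible (β.comp (.prodMap (.id P) ⟨Subtype.val, by fun_prop⟩)) γ'
  obtain ⟨Φ, hΦ0, hΦA⟩ := hA.exists_homotopy_extension β Θ.toContinuousMap
    fun p a => Θ.apply_zero (p, a)
  refine ⟨⟨fun x => e.map (x.2.2, Φ x), by fun_prop⟩, fun x => e.proj_map _ _, fun x => ?_,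
    fun p a => ?_⟩
  · exact (congrArg (fun f => e.map (x.2, f)) (hΦ0 x)).trans (e.map_coord ⟨(x.2, c x), hc x⟩)
  · exact (congrArg (fun f => e.map (a, f)) ((hΦA 1 p a).trans (Θ.apply_one (p, a)))).trans
      (e.map_coord ⟨(a, γ a), hγ a⟩)

end Germ

section SectionSpace

variable {E M F : Type u} [TopologicalSpace E] [TopologicalSpace M] [TopologicalSpace F]
  [LocallyCompactSpace M] {π : E → M} {P : Type*} [TopologicalSpace P] {D : Set M}

theorem SectionSpace.continuous_eval_comp (b : C(P, SectionSpace π)) :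
    Continuous fun x : P × M => (b x.1).1 x.2 := by
  have : Continuous fun p => (b p).1 := continuous_subtype_val.comp b.continuous
  fun_prop

theorem SectionSpace.exists_damped_homotopy (hD : IsClosed D) (b : C(P, SectionSpace π))
    (Ψ : C(I × (P × D), E)) (hΨ : ∀ x, π (Ψ x) = x.2.2)
    (hΨ0 : ∀ p z, Ψ (0, (p, z)) = (b p).1 z) (l : C(M, I)) (hl : ∀ z ∉ interior D, l z = 0) :
    ∃ H : C(I × P, SectionSpace π),
      (∀ t p (z : D), (H (t, p)).1 z = Ψ (t * l z, (p, z))) ∧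
        ∀ t p z, l z = 0 → (H (t, p)).1 z = (b p).1 z := by
  have hb := continuous_eval_comp b
  obtain ⟨h, hhD, hhb⟩ := exists_continuousMap_of_isClosed_cover
    (X := (I × P) × M) (s := {x | x.2 ∈ D}) (t := {x | x.2 ∈ (interior D)ᶜ})
    (hD.preimage continuous_snd) (isOpen_interior.isClosed_compl.preimage continuous_snd)
    (fun x => (em (x.2 ∈ D)).imp_right fun h h' => h (interior_subset h'))
    ⟨fun x => Ψ (x.1.1.1 * l x.1.2, (x.1.1.2, ⟨x.1.2, x.2⟩)), by fun_prop⟩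
    ⟨fun x => (b x.1.1.2).1 x.1.2, hb.comp (by fun_prop : Continuous fun x :
      {x : (I × P) × M | x.2 ∈ (interior D)ᶜ} => (x.1.1.2, x.1.2))⟩
    fun x hx hx' => by
      simp only [ContinuousMap.coe_mk, hl x.2 hx', mul_zero]
      exact hΨ0 x.1.2 ⟨x.2, hx⟩
  have hhD' (x : I × P) (z : D) : h (x, z) = Ψ (x.1 * l z, (x.2, z)) := hhD ⟨(x, z), z.2⟩
  have hhb' (x : I × P) (z : M) (hz : l z = 0) : h (x, z) = (b x.2).1 z := by
    by_cases hzD : z ∈ D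
    · rw [hhD' x ⟨z, hzD⟩, hz, mul_zero, hΨ0]
    · exact hhb ⟨(x, z), fun h => hzD (interior_subset h)⟩
  have hπ (x : I × P) (z : M) : π (h (x, z)) = z := by
    by_cases hzD : z ∈ D
    · exact (congrArg π (hhD' x ⟨z, hzD⟩)).trans (hΨ _)
    · rw [hhb' x z (hl z fun h => hzD (interior_subset h)), (b _).2]
  exact ⟨⟨fun x => ⟨h.curry x, hπ x⟩, by fun_prop⟩, fun t p z => hhD' (t, p) z,
    fun t p z => hhb' (t, p) z⟩

theorem IsFiberBundle.exists_homotopy_fixes [T2Space M] [PathConnectedSpace F] [ContractibleSpace P]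
    (hπ : IsFiberBundle F π) (g : GermData π) (hg : IsCompact g.Δ) [ContractibleSpace g.Δ] {d : ℕ}
    (h : D ≃ₜ closedDisk d) (hgD : g.Δ ⊆ interior D)
    (hcof : ClosedCofibration (X := D) (Subtype.val ⁻¹' g.Δ)) {C : Set M} (hC : IsClosed C)
    (hgC : Disjoint g.Δ C) (b : C(P, SectionSpace π)) :
    ∃ H : C(I × P, SectionSpace π), (∀ x, H (0, x) = b x) ∧ (∀ x, g.Fixes (H (1, x))) ∧
      ∀ t x, ∀ z ∈ C, (H (t, x)).1 z = (b x).1 z := by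
  obtain ⟨e⟩ := hπ.nonempty_pullbackTrivialization_of_homeomorph_closedDisk h
  have hD : IsClosed D := by
    have : CompactSpace (closedDisk d) :=
      isCompact_iff_compactSpace.1 (isCompact_closedBall _ _)
    exact (isCompact_iff_compactSpace.2 h.symm.compactSpace).isClosed
  have hgD' : g.Δ ⊆ range (Subtype.val : D → M) := by
    simpa only [Subtype.range_coe] using hgD.trans interior_subset
  have := (Topology.IsEmbedding.subtypeVal.homeomorphOfSubsetRange hgD').contractibleSpace
  obtain ⟨Ψ, hΨ, hΨ0, hΨ1⟩ := e.exists_homotopy hcof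
    ⟨fun x : P × D => (b x.1).1 x.2, (SectionSpace.continuous_eval_comp b).comp
      (by fun_prop : Continuous fun x : P × D => (x.1, (x.2 : M)))⟩ (fun x => (b x.1).2 x.2)
    ⟨fun a => g.sec ⟨a.1, g.subset a.2⟩, by fun_prop⟩ fun a => g.isSec _
  obtain ⟨l, hl1, hl0, -, hl⟩ := exists_continuous_one_zero_of_isCompact hg
    (t := (interior D)ᶜ ∪ C) (isOpen_interior.isClosed_compl.union hC)
    (disjoint_union_right.2 ⟨disjoint_compl_right_iff_subset.2 hgD, hgC⟩)
  let l' : C(M, I) := ⟨fun z => ⟨l z, hl z⟩, by fun_prop⟩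
  have hl0' : ∀ z ∈ (interior D)ᶜ ∪ C, l' z = 0 := fun z hz => Subtype.ext (hl0 hz)
  obtain ⟨H, hHD, hHb⟩ := SectionSpace.exists_damped_homotopy hD b Ψ hΨ
    (fun p z => hΨ0 (p, z)) l' fun z hz => hl0' z (Or.inl hz)
  refine ⟨H, fun x => Subtype.ext (ContinuousMap.ext fun z => ?_), fun x z hz => ?_,
    fun t x z hz => hHb t x z (hl0' z (Or.inr hz))⟩
  · by_cases hz : z ∈ D
    · rw [hHD 0 x ⟨z, hz⟩, zero_mul, hΨ0]; rfl
    · exact hHb 0 x z (hl0' z (Or.inl fun h => hz (interior_subset h)))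
  · have hzD : z ∈ D := interior_subset (hgD hz)
    rw [hHD 1 x ⟨z, hzD⟩, one_mul, show l' z = 1 from Subtype.ext (hl1 hz)]
    exact hΨ1 x ⟨⟨z, hzD⟩, hz⟩

end SectionSpace

section SeparatedSequence

variable {E M : Type u} [TopologicalSpace E] [TopologicalSpace M] {π : E → M}

theorem relSections_comp_equiv {κ : Type*} {S : Set κ} (g : κ → GermData π) {k : ℕ}
    (e : Fin k ≃ S) : relSections (fun j => g (e j)) = ⋂ i ∈ S, {s | (g i).Fixes s} := by
  ext s
  simp only [relSections, mem_iInter, mem_ofPred_eq]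
  exact ⟨fun h i hi => by simpa using h (e.symm ⟨i, hi⟩), fun h j => h _ (e j).2⟩

theorem IsSuffSep.exists_seq {d : ℕ} {W : Set (GermData π)} (hW : IsSuffSep d π W) :
    ∃ g : ℕ → GermData π, (∀ n, g n ∈ W) ∧ Pairwise fun m n => Disjoint (g m).Δ (g n).Δ := by
  obtain ⟨g, hg, hdisj⟩ := exists_seq_of_forall_finset_exists' (· ∈ W)
    (fun g g' : GermData π => Disjoint g.Δ g'.Δ) (fun s hs => by
      obtain ⟨g', hg', D, -, hD, hdisj⟩ := hW.sep s.card (fun i => (s.equivFin.symm i).1)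
        fun i => hs _ (s.equivFin.symm i).2
      refine ⟨g', hg', fun x hx => ?_⟩
      have h := hdisj (s.equivFin ⟨x, hx⟩)
      rw [Equiv.symm_apply_apply] at h
      exact (h.mono_left (hD.trans interior_subset)).symm)
  exact ⟨g, hg, hdisj⟩

variable {F : Type u} [TopologicalSpace F] [T2Space M] [LocallyCompactSpace M]
  [PathConnectedSpace F] {P κ : Type*} [TopologicalSpace P] [ContractibleSpace P]
  {g : κ → GermData π}

theorem IsSuffSep.exists_homotopy_fixes {d : ℕ} {W : Set (GermData π)} (hW : IsSuffSep d π W)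
    (hπ : IsFiberBundle F π) (hg : ∀ i, g i ∈ W)
    (hdisj : Pairwise fun i j => Disjoint (g i).Δ (g j).Δ) {T : Set κ} (hT : T.Finite) {m : κ}
    (hm : m ∉ T) (b : C(P, SectionSpace π)) :
    ∃ H : C(I × P, SectionSpace π), (∀ x, H (0, x) = b x) ∧ (∀ x, (g m).Fixes (H (1, x))) ∧
      ∀ i ∈ T, ∀ x t, (g i).Fixes (b x) → (g i).Fixes (H (t, x)) := by
  obtain ⟨D, ⟨h⟩, hD, hcof⟩ := hW.cofib _ (hg m)
  have := hW.contractible _ (hg m)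
  obtain ⟨H, H0, H1, HC⟩ := hπ.exists_homotopy_fixes (g m) (hW.compact _ (hg m)) h hD hcof
    (C := ⋃ i ∈ T, (g i).Δ) (hT.isClosed_biUnion fun i _ => (hW.compact _ (hg i)).isClosed)
    (disjoint_iUnion₂_right.2 fun i hi => hdisj (ne_of_mem_of_not_mem hi hm).symm) b
  exact ⟨H, H0, H1, fun i hi x t hb z hz => (HC t x z (mem_biUnion hi hz)).trans (hb z hz)⟩

end SeparatedSequence

end

theorem holonomic_section_up_to_homotopy_general {d : ℕ} {E M F : Type u} [TopologicalSpace E]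
    [TopologicalSpace M] [TopologicalSpace F] [LocallyCompactSpace M] [T2Space M]
    [PathConnectedSpace F] (π : E → M) (hπ : IsFiberBundle F π) (W : Set (GermData π))
    (hW : IsSuffSep d π W) (Fs : Set (SectionSpace π))
    (hyp : ∀ (k : ℕ), 1 ≤ k → ∀ g : Fin k → GermData π, (∀ i, g i ∈ W) → DisjTuple g →
      IsWeakHomotopyEquiv (fun s : ↥(Fs ∩ relSections g) =>
        (⟨s.1, s.2.2⟩ : ↥(relSections g)))) :
    ∃ (X : Type u) (_ : TopologicalSpace X) (s : X → ↥Fs) (w : X → SectionSpace π),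
      Continuous s ∧ Continuous w ∧ (∀ x, w x = ↑(s x)) ∧ IsWeakHomotopyEquiv w := by
  obtain ⟨g, hg, hdisj⟩ := hW.exists_seq
  let G : ℕ → Set (SectionSpace π) := fun i => {s | (g i).Fixes s}
  refine ⟨Resolution Fs G, inferInstance, fun p => p.1.1, resolutionMap Fs G, by fun_prop,
    ContinuousMap.continuous _, fun _ => rfl, isWeakHomotopyEquiv_of_hasLifting fun n =>
      hasLifting_resolutionMap (fun S hS hS' k => ?_) fun b T hT => ?_⟩
  · have := hS.to_subtype
    have := hS'.to_subtype
    let e := (Finite.equivFin S).symm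
    have h := hyp (Nat.card S) Nat.card_pos (fun j => g (e j)) (fun j => hg _)
      fun i j hij => hdisj fun h => hij (e.injective (Subtype.ext h))
    have hc := IsWeakHomotopyEquiv.compressible (hAY := Set.inter_subset_right) h k
    rwa [relSections_comp_equiv] at hc
  · obtain ⟨m, hm⟩ := hT.infinite_compl.nonempty
    have : ContractibleSpace (UnitBall (Fin n → ℝ)) :=
      Metric.contractibleSpace_closedBall zero_le_one
    obtain ⟨H, H0, H1, HT⟩ := hW.exists_homotopy_fixes hπ hg hdisj hT hm b
    exact ⟨m, H, H0, H1, HT⟩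

/-- **Theorem A.** Let `M` be a `d`-dimensional manifold without boundary, `π : E → M` a fiber
bundle with path-connected fiber `F`, and `W` a sufficiently separated collection for `π`.
Let `Fs ⊆ Γ(E)` be a subspace of "holonomic solutions", and for disjoint tuples of elements of
`W` let `Fs ∩ relSections g` be the corresponding relative space.  If for every `k ≥ 1` and
every `k`-tuple of pairwise disjoint elements of `W` the inclusion
`Fs ∩ Γ(E, Δ_1, …, Δ_k) ↪ Γ(E, Δ_1, …, Δ_k)` is a weak homotopy equivalence, then there is a
space `X` and maps `s : X → Fs`, `w : X → Γ(E)` such that `w` is the composite of `s` with the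
inclusion `Fs ↪ Γ(E)` and `w` is a weak homotopy equivalence: the inclusion `Fs ↪ Γ(E)` admits
a section up to weak homotopy. -/
theorem holonomic_section_up_to_homotopy {d : ℕ} {E M F : Type u}
    [TopologicalSpace E] [TopologicalSpace M] [TopologicalSpace F]
    [ChartedSpace (EuclideanSpace ℝ (Fin d)) M] [T2Space M] [PathConnectedSpace F]
    (π : E → M) (hπ : IsFiberBundle F π)
    (W : Set (GermData π)) (hW : IsSuffSep d π W)
    (Fs : Set (SectionSpace π))
    (hyp : ∀ (k : ℕ), 1 ≤ k → ∀ g : Fin k → GermData π, (∀ i, g i ∈ W) → DisjTuple g →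
      IsWeakHomotopyEquiv (fun s : ↥(Fs ∩ relSections g) =>
        (⟨s.1, s.2.2⟩ : ↥(relSections g)))) :
    ∃ (X : Type u) (_ : TopologicalSpace X) (s : X → ↥Fs) (w : X → SectionSpace π),
      Continuous s ∧ Continuous w ∧ (∀ x, w x = ↑(s x)) ∧ IsWeakHomotopyEquiv w := by
  have : LocallyCompactSpace M := ChartedSpace.locallyCompactSpace (EuclideanSpace ℝ (Fin d)) M
  exact holonomic_section_up_to_homotopy_general π hπ W hW Fs hyp
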